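/- arXiv:1804.08999 — 3 statements merged into one kernel-verified Lean document; each statement's English description precedes it below -/
import Mathlib

section
/- (Gradient Lojasiewicz inequality for the arrival time.) (a) 0 is the only critical value of u: if x ∈ Ω and ∇u(x) = 0, then u(x) = 0. (b) There is an integer k with 0 ≤ k ≤ n−1 such that |∇u|²/(−u) → 2/(n−k) as u → 0 from below: for every ε > 0 there is δ > 0 such that every x ∈ Ω with −δ < u(x) < 0 satisfies | |∇u(x)|²/(−u(x)) − 2/(n−k) | < ε. (c) In particular, there exists C > 0 such that C⁻¹ |∇u(x)|² ≤ −u(x) ≤ C |∇u(x)|² for all x ∈ Ω. -/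
/-!
The proof uses no flow; it combines the limiting form of the equation at critical points with one
step of discrete gradient ascent.

Let `p` be a critical point and `A = hess u p`. Approaching `p` along rays, the arrival time
equation gives `⟪A (A v), A v⟫ = (1 + tr A) ‖A v‖²` for all `v` (`hess_quadratic`). If `A ≠ 0`, this
forces `A = c P` with `P` an orthogonal projection of some rank `N ≥ 2` and `c = -1 / (N - 1)`
(`exists_rank_of_quadratic`). If `A = 0`, then `p` is not a limit of noncritical points, and
connectedness of `Ω` excludes this case (`hess_ne_zero_of_critical`).

The equation also shows that near `p` a gradient killed by `A` must vanish
(`eventually_gradient_eq_zero`). Hence the critical points near `p` are the zeros of `A ∇u`, and the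
inverse function theorem provides a `C¹` map `s` onto them along the range of `A`
(`exists_retraction`). Then `u ∘ s` is constant, and expanding `u` and `∇u` on the segment from
`s x` to `x` shows that `p` is a local maximum and that `‖∇u‖²` is asymptotic to `2 c (u - u p)`
(`local_max_and_ratio`).

For small `η > 0`, the map `x ↦ x + η ∇u(x)` sends `Ω` to itself, strictly increases `u` off the
critical set, and fixes the critical points (`exists_ascent_step`). Since all its fixed points are
local maxima of `u`, they form a connected set, namely the set where `u` attains its maximum `0`
(`fixedPoints_connected_of_ascent`). Therefore `0` is the only critical value, the rank `N` is the
same at all critical points, and compactness turns the local asymptotics, with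
`-2 c = 2 / (N - 1) = 2 / (n - k)` for `k = n + 1 - N`, into the global estimates.
-/

open Filter Set MeasureTheory
open scoped RealInnerProductSpace

/-- The Hessian of `u` at `x`, as the derivative of the gradient. -/
noncomputable def hess {m : ℕ} (u : EuclideanSpace ℝ (Fin m) → ℝ)
    (x : EuclideanSpace ℝ (Fin m)) :
    EuclideanSpace ℝ (Fin m) →L[ℝ] EuclideanSpace ℝ (Fin m) :=
  fderiv ℝ (gradient u) x

/-- The Laplacian of `u` at `x`, as the trace of the Hessian. -/
noncomputable def lap {m : ℕ} (u : EuclideanSpace ℝ (Fin m) → ℝ)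
    (x : EuclideanSpace ℝ (Fin m)) : ℝ :=
  LinearMap.trace ℝ _ (hess u x : EuclideanSpace ℝ (Fin m) →ₗ[ℝ] EuclideanSpace ℝ (Fin m))

open Topology

/-! ### Connectedness of the fixed point set of an ascent map -/

section Connected

theorem isPreconnected_iInter_nat {X : Type*} [TopologicalSpace X] [CompactSpace X] [T2Space X]
    (K : ℕ → Set X) (hK : Antitone K) (hcl : ∀ j, IsClosed (K j))
    (hconn : ∀ j, IsPreconnected (K j)) : IsPreconnected (⋂ j, K j) := by
  rw [isPreconnected_iff_subset_of_disjoint_closed]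
  intro A B hA hB hAB hdisj
  have hI : IsClosed (⋂ j, K j) := isClosed_iInter hcl
  have hd : Disjoint ((⋂ j, K j) ∩ A) ((⋂ j, K j) ∩ B) := by
    rw [Set.disjoint_iff_inter_eq_empty, ← hdisj]
    ext x; simp only [mem_inter_iff]; tauto
  obtain ⟨O₁, O₂, hO₁, hO₂, hA₁, hB₂, hO⟩ := normal_separation (hI.inter hA) (hI.inter hB) hd
  obtain ⟨j, hj⟩ : ∃ j, K j ⊆ O₁ ∪ O₂ := by
    refine exists_subset_nhds_of_compactSpace hK.directed_ge hcl ?_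
    intro x hx
    refine (hO₁.union hO₂).mem_nhds ?_
    rcases hAB hx with h | h
    · exact Or.inl (hA₁ ⟨hx, h⟩)
    · exact Or.inr (hB₂ ⟨hx, h⟩)
  have hIK : (⋂ j, K j) ⊆ K j := iInter_subset _ _
  rcases isPreconnected_iff_subset_of_disjoint.1 (hconn j) O₁ O₂ hO₁ hO₂ hj
    (by rw [hO.inter_eq, inter_empty]) with h | h
  · left
    intro x hx
    rcases hAB hx with h' | h'
    · exact h'
    · exact (hO.le_bot ⟨h (hIK hx), hB₂ ⟨hx, h'⟩⟩).elim
  · right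
    intro x hx
    rcases hAB hx with hxB | hxB
    · exact (hO.le_bot ⟨hA₁ ⟨hx, hxB⟩, h (hIK hx)⟩).elim
    · exact hxB

/-- If a self-map `Φ` of a compact connected space increases `u` except at its fixed points, and each
fixed point is a local maximum of `u`, then the fixed points form a connected set, which is the set
where `u` is maximal. They all lie in the connected set `⋂ j, range Φ^[j]`, which `Φ` maps onto
itself; points of that set minimizing `u` over it are fixed, hence local maxima, so that the set of
minimizers is open in it and `u` is constant there. -/
theorem fixedPoints_connected_of_ascent {X : Type*} [TopologicalSpace X] [CompactSpace X]
    [T2Space X] [ConnectedSpace X] (Φ : X → X) (hΦ : Continuous Φ) (u : X → ℝ) (hu : Continuous u)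
    (hasc : ∀ x, u x ≤ u (Φ x)) (heq : ∀ x, u (Φ x) = u x → Φ x = x)
    (hmax : ∀ x, Φ x = x → ∀ᶠ y in 𝓝 x, u y ≤ u x) :
    IsPreconnected {x | Φ x = x} ∧
      ∃ x₀, (∀ x, u x ≤ u x₀) ∧ ∀ x, Φ x = x ↔ u x = u x₀ := by
  obtain ⟨x₀, hx₀⟩ : ∃ x₀, ∀ y, u y ≤ u x₀ := by
    obtain ⟨x₀, -, h⟩ := isCompact_univ.exists_isMaxOn univ_nonempty hu.continuousOn
    exact ⟨x₀, fun y => h (mem_univ y)⟩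
  have hfix₀ : Φ x₀ = x₀ := heq _ (le_antisymm (hx₀ _) (hasc _))
  let K : ℕ → Set X := fun j => range (Φ^[j])
  have hKc : ∀ j, IsCompact (K j) := fun j => isCompact_range (hΦ.iterate j)
  have hKcl : ∀ j, IsClosed (K j) := fun j => (hKc j).isClosed
  have hKanti : Antitone K := by
    refine antitone_nat_of_succ_le fun j => ?_
    rintro _ ⟨y, rfl⟩
    exact ⟨Φ y, rfl⟩
  have hfixK : ∀ x, Φ x = x → x ∈ ⋂ j, K j := fun x hx =>
    mem_iInter.2 fun j => ⟨x, Function.iterate_fixed hx j⟩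
  have hconn : IsPreconnected (⋂ j, K j) :=
    isPreconnected_iInter_nat K hKanti hKcl fun j => isPreconnected_range (hΦ.iterate j)
  -- `Φ` maps the eventual image onto itself.
  have hsurj : ∀ x ∈ ⋂ j, K j, ∃ y ∈ ⋂ j, K j, Φ y = x := by
    intro x hx
    have hcl : ∀ j, IsClosed (K j ∩ Φ ⁻¹' {x}) := fun j =>
      (hKcl j).inter (isClosed_singleton.preimage hΦ)
    obtain ⟨y, hy⟩ := IsCompact.nonempty_iInter_of_sequence_nonempty_isCompact_isClosed
      (fun j => K j ∩ Φ ⁻¹' {x})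
      (fun j => inter_subset_inter_left _ (hKanti (Nat.le_succ j)))
      (fun j => by
        obtain ⟨z, hz⟩ := mem_iInter.1 hx (j + 1)
        refine ⟨Φ^[j] z, ⟨z, rfl⟩, ?_⟩
        rw [Function.iterate_succ_apply'] at hz
        exact hz)
      (hcl 0).isCompact hcl
    rw [mem_iInter] at hy
    exact ⟨y, mem_iInter.2 fun j => (hy j).1, (hy 0).2⟩
  obtain ⟨k, hkK, hk⟩ := (isClosed_iInter hKcl).isCompact.exists_isMinOn
    ⟨x₀, hfixK x₀ hfix₀⟩ hu.continuousOn
  -- A minimum point of `u` on the eventual image cannot move.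
  have hminfix : ∀ x ∈ ⋂ j, K j, u x = u k → Φ x = x := by
    intro x hx hxk
    obtain ⟨y, hy, rfl⟩ := hsurj x hx
    have h1 : u k ≤ u y := hk hy
    have h2 := heq y (le_antisymm (by linarith) (hasc y))
    rw [h2, h2]
  have hsub : (⋂ j, K j) ⊆ interior {y | u y ≤ u k} := by
    refine hconn.subset_left_of_subset_union isOpen_interior
      (isOpen_lt continuous_const hu : IsOpen {y | u k < u y}) ?_ ?_ ?_
    · rw [Set.disjoint_left]
      intro y hy hy'
      have hle := interior_subset hy
      exact (show u k < u y from hy').not_ge hle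
    · intro x hx
      rcases (show u k ≤ u x from hk hx).eq_or_lt with h | h
      · left
        rw [mem_interior_iff_mem_nhds]
        have := hmax x (hminfix x hx h.symm)
        rw [← h] at this
        exact this
      · exact Or.inr h
    · refine ⟨k, hkK, ?_⟩
      rw [mem_interior_iff_mem_nhds]
      exact hmax k (hminfix k hkK rfl)
  have hconst : ∀ x ∈ ⋂ j, K j, u x = u k := fun x hx =>
    by
    have hle := interior_subset (hsub hx)
    exact le_antisymm hle (hk hx)
  have hkM : u x₀ = u k := hconst x₀ (hfixK x₀ hfix₀)
  have hset : {x | Φ x = x} = ⋂ j, K j :=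
    Subset.antisymm (fun x hx => hfixK x hx) fun x hx => hminfix x hx (hconst x hx)
  refine ⟨hset ▸ hconn, x₀, hx₀, fun x => ⟨fun hx => ?_, fun hx => ?_⟩⟩
  · rw [hconst x (hfixK x hx), hkM]
  · exact heq x (le_antisymm (by rw [hx]; exact hx₀ _) (hasc x))

end Connected

/-! ### The Hessian at a critical point: linear algebra -/

section Algebra

variable {E : Type*} [NormedAddCommGroup E] [InnerProductSpace ℝ E]

theorem sq_eq_smul_of_quadratic (A : E →L[ℝ] E) (hsymm : ∀ v w, ⟪A v, w⟫ = ⟪v, A w⟫) (c : ℝ)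
    (hq : ∀ v, ⟪A (A v), A v⟫ = c * ‖A v‖ ^ 2) (v : E) : A (A v) = c • A v := by
  -- The form `⟪(A - c) ·, ·⟫` vanishes on the range of `A`; polarize it.
  have hpol : ∀ v w, ⟪A (A v) - c • A v, A w⟫ = 0 := by
    intro v w
    have h1 := hq v
    have h2 := hq w
    have h3 := hq (v + w)
    have h4 : ⟪A (A w), A v⟫ = ⟪A (A v), A w⟫ := by
      rw [hsymm (A w) (A v), real_inner_comm]
    have h5 : ⟪A w, A v⟫ = ⟪A v, A w⟫ := real_inner_comm _ _
    simp only [map_add, ← real_inner_self_eq_norm_sq, inner_add_left, inner_add_right] at h1 h2 h3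
    rw [inner_sub_left, real_inner_smul_left]
    rw [h4, h5] at h3
    linarith
  have h := hpol v (A v - c • v)
  rw [map_sub, map_smul, inner_self_eq_zero] at h
  exact sub_eq_zero.1 h

/-- With `c = 1 + tr A`, the hypothesis forces `A = c P` for a projection `P`. If `m` is the rank of
`P`, then `c = 1 + c m`, which determines `c` and excludes `m = 1`. -/
theorem exists_rank_of_quadratic [FiniteDimensional ℝ E] (A : E →L[ℝ] E) (hA : A ≠ 0)
    (hsymm : ∀ v w, ⟪A v, w⟫ = ⟪v, A w⟫)
    (hq : ∀ v, ⟪A (A v), A v⟫ = (1 + LinearMap.trace ℝ E (A : E →ₗ[ℝ] E)) * ‖A v‖ ^ 2) :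
    ∃ m : ℕ, 2 ≤ m ∧ m ≤ Module.finrank ℝ E ∧
      1 + LinearMap.trace ℝ E (A : E →ₗ[ℝ] E) = -1 / ((m : ℝ) - 1) ∧
      ∀ v, A (A v) = (-1 / ((m : ℝ) - 1)) • A v := by
  set c := 1 + LinearMap.trace ℝ E (A : E →ₗ[ℝ] E) with hc
  have hsq := sq_eq_smul_of_quadratic A hsymm c hq
  have hc0 : c ≠ 0 := by
    intro h0
    apply hA
    ext1 v
    have h1 : ⟪A v, A v⟫ = 0 := by rw [hsymm, hsq v, h0]; simp
    simpa using h1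
  let p := LinearMap.range (A : E →ₗ[ℝ] E)
  -- `c⁻¹ A` is a projection onto the range of `A`, so its trace is the rank.
  have hproj : LinearMap.IsProj p (c⁻¹ • (A : E →ₗ[ℝ] E)) := by
    constructor
    · intro x
      exact p.smul_mem _ ⟨x, rfl⟩
    · rintro _ ⟨y, rfl⟩
      simp [hsq y, smul_smul, inv_mul_cancel₀ hc0]
  have htr := hproj.trace
  rw [map_smul, smul_eq_mul] at htr
  set m := Module.finrank ℝ p with hm
  have hpos : 0 < m := by
    rw [hm, Module.finrank_pos_iff, Submodule.nontrivial_iff_ne_bot]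
    intro h
    apply hA
    ext1 v
    have : A v ∈ p := ⟨v, rfl⟩
    rw [h] at this
    simpa using this
  have hcm : c = 1 + c * m := by
    rw [← htr]
    field_simp
    linarith
  have hm1 : m ≠ 1 := by
    intro h; rw [h] at hcm; norm_num at hcm
  have hm2 : 2 ≤ m := by omega
  have hm2' : (2 : ℝ) ≤ m := by exact_mod_cast hm2
  have hval : c = -1 / ((m : ℝ) - 1) := by
    rw [eq_div_iff (by linarith)]
    linarith
  exact ⟨m, hm2, Submodule.finrank_le _, hval, fun v => by rw [← hval]; exact hsq v⟩

end Algebra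

/-! ### The arrival time equation at a critical point -/

section Hessian

variable {m : ℕ} {u : EuclideanSpace ℝ (Fin m) → ℝ} {p : EuclideanSpace ℝ (Fin m)}

theorem contDiffAt_gradient (hu : ContDiffAt ℝ 2 u p) : ContDiffAt ℝ 1 (gradient u) p := by
  have h : ContDiffAt ℝ 1 (fderiv ℝ u) p := hu.fderiv_right (by norm_num)
  exact (InnerProductSpace.toDual ℝ _).symm.contDiff.contDiffAt.comp p h

theorem hess_continuousAt (hu : ContDiffAt ℝ 2 u p) : ContinuousAt (hess u) p :=
  ((contDiffAt_gradient hu).fderiv_right (m := 0) (by norm_num)).continuousAt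

theorem lap_continuousAt (hu : ContDiffAt ℝ 2 u p) : ContinuousAt (lap u) p := by
  let T : (EuclideanSpace ℝ (Fin m) →L[ℝ] EuclideanSpace ℝ (Fin m)) →ₗ[ℝ] ℝ :=
    (LinearMap.trace ℝ (EuclideanSpace ℝ (Fin m))).comp
      (ContinuousLinearMap.coeLM ℝ)
  exact (LinearMap.continuous_of_finiteDimensional T).continuousAt.comp (hess_continuousAt hu)

theorem hasStrictFDerivAt_gradient (hu : ContDiffAt ℝ 2 u p) :
    HasStrictFDerivAt (gradient u) (hess u p) p :=
  (contDiffAt_gradient hu).hasStrictFDerivAt (by norm_num)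

theorem hess_symm (hu : ContDiffAt ℝ 2 u p) (v w : EuclideanSpace ℝ (Fin m)) :
    ⟪hess u p v, w⟫ = ⟪v, hess u p w⟫ := by
  have hs : IsSymmSndFDerivAt ℝ u p := hu.isSymmSndFDerivAt (by simp)
  have hd : DifferentiableAt ℝ (fderiv ℝ u) p :=
    (hu.fderiv_right (m := 1) (by norm_num)).differentiableAt (by norm_num)
  have hh : ∀ v w, ⟪hess u p v, w⟫ = fderiv ℝ (fderiv ℝ u) p v w := by
    intro v w
    have h0 : fderiv ℝ u = fun x => innerSL ℝ (gradient u x) := by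
      ext x w
      simp [gradient]
    have h1 : HasFDerivAt (fun x => innerSL ℝ (gradient u x)) ((innerSL ℝ).comp (hess u p)) p :=
      (innerSL ℝ).hasFDerivAt.comp p (hasStrictFDerivAt_gradient hu).hasFDerivAt
    rw [h0, h1.fderiv]
    rfl
  rw [hh, real_inner_comm, hh]
  exact hs.eq v w

/-- The arrival time equation passes to the limit along the gradients `∇u(p + t v) ≈ t Hess u(p) v`
as `t → 0`. -/
theorem hess_quadratic (hu : ContDiffAt ℝ 2 u p) (hp : gradient u p = 0)
    (harr : ∀ᶠ x in 𝓝 p,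
      ⟪hess u x (gradient u x), gradient u x⟫ = (1 + lap u x) * ‖gradient u x‖ ^ 2)
    (v : EuclideanSpace ℝ (Fin m)) :
    ⟪hess u p (hess u p v), hess u p v⟫ = (1 + lap u p) * ‖hess u p v‖ ^ 2 := by
  have hline : HasDerivAt (fun t : ℝ => p + t • v) v 0 := by
    simpa using ((hasDerivAt_id (0 : ℝ)).smul_const v).const_add p
  have hline0 : Tendsto (fun t : ℝ => p + t • v) (𝓝[≠] 0) (𝓝 p) := by
    have := hline.continuousAt.tendsto
    simp only [zero_smul, add_zero] at this
    exact this.mono_left nhdsWithin_le_nhds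
  have hG : Tendsto (fun t : ℝ => t⁻¹ • gradient u (p + t • v)) (𝓝[≠] 0) (𝓝 (hess u p v)) := by
    have hg : HasFDerivAt (gradient u) (hess u p) (p + (0 : ℝ) • v) := by
      simpa using (hasStrictFDerivAt_gradient hu).hasFDerivAt
    have := hasDerivAt_iff_tendsto_slope_zero.1 (hg.comp_hasDerivAt (0 : ℝ) hline)
    simpa [hp] using this
  have hH : Tendsto (fun t : ℝ => hess u (p + t • v)) (𝓝[≠] 0) (𝓝 (hess u p)) :=
    (hess_continuousAt hu).tendsto.comp hline0
  have hL : Tendsto (fun t : ℝ => lap u (p + t • v)) (𝓝[≠] 0) (𝓝 (lap u p)) :=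
    (lap_continuousAt hu).tendsto.comp hline0
  have h1 := ((isBoundedBilinearMap_apply (𝕜 := ℝ)).continuous.tendsto _ |>.comp
    (hH.prodMk_nhds hG)).inner (𝕜 := ℝ) hG
  have h2 := (hL.const_add 1).mul (hG.norm.pow 2)
  refine tendsto_nhds_unique_of_eventuallyEq h1 h2 ?_
  filter_upwards [hline0.eventually harr] with t ht
  simp only [Function.comp_apply, map_smul, real_inner_smul_left, real_inner_smul_right, ht,
    norm_smul, mul_pow, Real.norm_eq_abs, sq_abs]
  ring

/-- By the arrival time equation, the unit vector `ν` in the direction of a nonzero gradient near `p`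
satisfies `⟪hess u p ν, ν⟫ ≈ 1 + lap u p`; when this number is nonzero, the Hessian at `p` kills no
gradient near `p` except the zero vector. -/
theorem eventually_gradient_eq_zero (hu : ContDiffAt ℝ 2 u p) (hc : 1 + lap u p ≠ 0)
    (harr : ∀ᶠ x in 𝓝 p,
      ⟪hess u x (gradient u x), gradient u x⟫ = (1 + lap u x) * ‖gradient u x‖ ^ 2) :
    ∀ᶠ x in 𝓝 p, hess u p (gradient u x) = 0 → gradient u x = 0 := by
  set c := 1 + lap u p with hcdef
  have hc' : 0 < |c| / 2 := by positivity
  have h1 : ∀ᶠ x in 𝓝 p, dist (hess u x) (hess u p) < |c| / 2 :=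
    (hess_continuousAt hu).eventually (Metric.ball_mem_nhds _ hc')
  have h2 : ∀ᶠ x in 𝓝 p, dist (1 + lap u x) c < |c| / 2 :=
    ((lap_continuousAt hu).const_add 1).eventually (Metric.ball_mem_nhds _ hc')
  filter_upwards [h1, h2, harr] with x h1 h2 h3 h4
  by_contra hne
  set g := gradient u x
  have hg : 0 < ‖g‖ ^ 2 := by positivity
  have h5 : ⟪(hess u x - hess u p) g, g⟫ = (1 + lap u x) * ‖g‖ ^ 2 := by
    rw [_root_.sub_apply, h4, sub_zero, h3]
  have h6 : |⟪(hess u x - hess u p) g, g⟫| ≤ |c| / 2 * ‖g‖ ^ 2 := by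
    refine (abs_real_inner_le_norm _ _).trans ?_
    rw [dist_eq_norm] at h1
    have := (hess u x - hess u p).le_of_opNorm_le h1.le g
    nlinarith [norm_nonneg g]
  rw [h5, abs_mul, abs_of_pos hg] at h6
  have h7 := le_of_mul_le_mul_right h6 hg
  rw [Real.dist_eq] at h2
  have h8 := abs_sub_abs_le_abs_sub c (1 + lap u x)
  rw [abs_sub_comm] at h8
  linarith

end Hessian

/-! ### Behaviour of `u` near a critical point -/

section LocalForm

variable {m : ℕ} {u : EuclideanSpace ℝ (Fin m) → ℝ} {p : EuclideanSpace ℝ (Fin m)}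

/-- A Taylor estimate: if `∇u` is close to the affine function `w + t w'` along the segment
`s + t τ`, then the increment of `u` is close to the integral of that function against `τ`. -/
theorem abs_sub_le_of_gradient_on_segment {s τ w w' : EuclideanSpace ℝ (Fin m)} {C : ℝ}
    (hd : ∀ t ∈ Icc (0 : ℝ) 1, DifferentiableAt ℝ u (s + t • τ))
    (hb : ∀ t ∈ Icc (0 : ℝ) 1, |⟪gradient u (s + t • τ) - w - t • w', τ⟫| ≤ C) :
    |u (s + τ) - u s - ⟪w, τ⟫ - ⟪w', τ⟫ / 2| ≤ C := by
  let φ : ℝ → ℝ := fun t => u (s + t • τ) - t * ⟪w, τ⟫ - t ^ 2 * (⟪w', τ⟫ / 2)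
  have hφ : ∀ t ∈ Icc (0 : ℝ) 1,
      HasDerivAt φ (⟪gradient u (s + t • τ) - w - t • w', τ⟫) t := by
    intro t ht
    have h1 : HasDerivAt (fun t : ℝ => s + t • τ) τ t := by
      simpa using ((hasDerivAt_id t).smul_const τ).const_add s
    have h2 := (hd t ht).hasGradientAt.hasFDerivAt.comp_hasDerivAt t h1
    have h3 := (h2.sub ((hasDerivAt_id t).mul_const ⟪w, τ⟫)).sub
      ((hasDerivAt_pow 2 t).mul_const (⟪w', τ⟫ / 2))
    refine h3.congr_deriv ?_
    simp [inner_sub_left, real_inner_smul_left]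
    ring
  have h := norm_image_sub_le_of_norm_deriv_le_segment_01' (f := φ)
    (fun t ht => (hφ t ht).hasDerivWithinAt) (C := C)
    (fun t ht => hb t (Ico_subset_Icc_self ht))
  have e : φ 1 - φ 0 = u (s + τ) - u s - ⟪w, τ⟫ - ⟪w', τ⟫ / 2 := by
    simp [φ]; ring
  rwa [e] at h

/-- Real arithmetic for `local_max_and_ratio`, where `G` is the norm of the gradient at a point, `r`
the distance to the critical set and `D` the drop of `u`: if `G ≈ a r` and `D ≈ a r² / 2` then
`G² ≈ 2 a D`. -/
theorem abs_sq_sub_le_of_close {a ε T r G D : ℝ} (ha : 0 < a) (hε : 0 < ε) (hεa : ε ≤ a / 4)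
    (hr : 0 ≤ r) (hG0 : 0 ≤ G) (hT : T = r ^ 2) (hG : |G - a * r| ≤ ε * r)
    (hD : |D - a * T / 2| ≤ ε * T) : 0 ≤ D ∧ |G ^ 2 - 2 * a * D| ≤ 20 * ε * D := by
  have hT0 : 0 ≤ T := hT ▸ sq_nonneg r
  rw [abs_le] at hD
  have hDT : a / 4 * T ≤ D := by nlinarith
  have hD0 : 0 ≤ D := le_trans (by positivity) hDT
  refine ⟨hD0, ?_⟩
  have h1 : |G ^ 2 - a ^ 2 * T| ≤ 3 * a * ε * T := by
    have e : G ^ 2 - a ^ 2 * T = (G - a * r) * (G + a * r) := by rw [hT]; ring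
    rw [e, abs_mul]
    have h2 : |G + a * r| ≤ 3 * a * r := by
      rw [abs_of_nonneg (by positivity)]
      have := (abs_le.1 hG).2
      nlinarith
    calc |G - a * r| * |G + a * r| ≤ (ε * r) * (3 * a * r) := by gcongr
      _ = 3 * a * ε * T := by rw [hT]; ring
  have h3 : 5 * a * ε * T ≤ 20 * ε * D := by nlinarith
  have h4 : 2 * a * ε * T ≥ |a ^ 2 * T - 2 * a * D| := by
    rw [ge_iff_le, abs_le]; constructor <;> nlinarith
  have h5 := abs_sub_le (G ^ 2) (a ^ 2 * T) (2 * a * D)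
  linarith

/-- A `C¹` map `s` sending points near `p` to critical points, and moving them only in the direction
of the eigenspace of the Hessian for `c`. It solves `A ∇u(s) = 0` with `c s - A s = c x - A x`,
where `A = hess u p`, by the inverse function theorem: the map `A ∇u + c (c - A)` has derivative
`c²` at `p`. -/
theorem exists_retraction (hu : ContDiffAt ℝ 2 u p) (hp : gradient u p = 0) {c : ℝ} (hc : c < 0)
    (hsq : ∀ v, hess u p (hess u p v) = c • hess u p v)
    (hker : ∀ᶠ x in 𝓝 p, hess u p (gradient u x) = 0 → gradient u x = 0) :
    ∃ s : EuclideanSpace ℝ (Fin m) → EuclideanSpace ℝ (Fin m), ContDiffAt ℝ 1 s p ∧ s p = p ∧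
      ∀ᶠ x in 𝓝 p, gradient u (s x) = 0 ∧ hess u p (x - s x) = c • (x - s x) := by
  set A := hess u p with hA
  let F : EuclideanSpace ℝ (Fin m) → EuclideanSpace ℝ (Fin m) :=
    fun x => A (gradient u x) + c • (c • x - A x)
  have hc2 : c ^ 2 ≠ 0 := pow_ne_zero 2 hc.ne
  let e : EuclideanSpace ℝ (Fin m) ≃L[ℝ] EuclideanSpace ℝ (Fin m) :=
    ContinuousLinearEquiv.smulLeft (Units.mk0 (c ^ 2) hc2)
  have hFc : ContDiffAt ℝ 1 F p :=
    (A.contDiff.contDiffAt.comp p (contDiffAt_gradient hu)).add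
      (((contDiff_id.const_smul c).sub A.contDiff).const_smul c).contDiffAt
  have hF : HasStrictFDerivAt F (e : EuclideanSpace ℝ (Fin m) →L[ℝ] EuclideanSpace ℝ (Fin m)) p := by
    have h1 := (A.hasStrictFDerivAt.comp p (hasStrictFDerivAt_gradient hu)).add
      ((((hasStrictFDerivAt_id p).const_smul c).sub A.hasStrictFDerivAt).const_smul c)
    refine h1.congr_fderiv ?_
    ext1 v
    have : e v = (c ^ 2) • v := rfl
    simp [this, ← hA, hsq, smul_sub, smul_smul, sq]
  let L := hFc.localInverse hF.hasFDerivAt (by norm_num)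
  let B : EuclideanSpace ℝ (Fin m) → EuclideanSpace ℝ (Fin m) := fun x => c • (c • x - A x)
  have hFp : F p = B p := by simp [F, B, hp]
  have hLp : L (F p) = p := hFc.localInverse_apply_image hF.hasFDerivAt (by norm_num)
  have hB : ContDiff ℝ 1 B := ((contDiff_id.const_smul c).sub A.contDiff).const_smul c
  have hsc : ContDiffAt ℝ 1 (fun x => L (B x)) p := by
    have h1 : ContDiffAt ℝ 1 L (B p) := by
      rw [← hFp]; exact hFc.to_localInverse hF.hasFDerivAt (by norm_num)
    exact h1.comp p hB.contDiffAt
  have hsp : L (B p) = p := by rw [← hFp, hLp]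
  refine ⟨fun x => L (B x), hsc, hsp, ?_⟩
  have hst : Tendsto (fun x => L (B x)) (𝓝 p) (𝓝 p) := by
    have := hsc.continuousAt.tendsto
    rwa [hsp] at this
  have hright : ∀ᶠ y in 𝓝 (F p), F (L y) = y := hF.eventually_right_inverse
  rw [hFp] at hright
  filter_upwards [hst.eventually hker, hB.continuous.continuousAt.eventually hright] with x h1 h2
  have h3 : A (gradient u (L (B x))) = 0 := by
    have h4 := congrArg A h2
    simp only [F, B, map_add, map_smul, map_sub, hsq, sub_self, smul_zero, add_zero] at h4
    exact (smul_eq_zero.1 h4).resolve_left hc.ne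
  refine ⟨h1 h3, ?_⟩
  have h4 : c • (c • L (B x) - A (L (B x))) = c • (c • x - A x) := by
    have h5 : F (L (B x)) = B x := h2
    simp only [F, h3, zero_add] at h5
    exact h5
  have h5 := smul_right_injective _ hc.ne h4
  rw [map_sub, smul_sub]
  beta_reduce at h5
  rw [sub_eq_sub_iff_add_eq_add] at h5 ⊢
  rw [add_comm, ← h5, add_comm]

/-- Near a critical point `p`, the function `u` is at most `u p`, and `|∇u|²` is asymptotic to
`2 c (u - u p)`. On the segment from the critical point `s x` to `x`, the gradient is approximately
`c` times the displacement, while `u (s x) = u p` because `u ∘ s` has vanishing derivative. -/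
theorem local_max_and_ratio (hu : ContDiffAt ℝ 2 u p) (hp : gradient u p = 0) {c : ℝ} (hc : c < 0)
    (hsq : ∀ v, hess u p (hess u p v) = c • hess u p v)
    (hker : ∀ᶠ x in 𝓝 p, hess u p (gradient u x) = 0 → gradient u x = 0) {ε : ℝ} (hε : 0 < ε) :
    ∀ᶠ x in 𝓝 p, u x ≤ u p ∧
      |‖gradient u x‖ ^ 2 - 2 * c * (u x - u p)| ≤ ε * (u p - u x) := by
  obtain ⟨s, hsc, hsp, hs⟩ := exists_retraction hu hp hc hsq hker
  have hst : Tendsto s (𝓝 p) (𝓝 p) := by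
    have := hsc.continuousAt.tendsto
    rwa [hsp] at this
  have hud : ∀ᶠ x in 𝓝 p, DifferentiableAt ℝ u x :=
    (hu.eventually (by simp)).mono fun x hx => hx.differentiableAt (by norm_num)
  have hsd : ∀ᶠ x in 𝓝 p, DifferentiableAt ℝ s x :=
    (hsc.eventually (by simp)).mono fun x hx => hx.differentiableAt (by norm_num)
  -- `u ∘ s` has zero derivative near `p`, since `s` takes critical values.
  have hconst : ∀ᶠ x in 𝓝 p, u (s x) = u p := by
    have hder : ∀ᶠ x in 𝓝 p, HasFDerivAt (fun x => u (s x))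
        (0 : EuclideanSpace ℝ (Fin m) →L[ℝ] ℝ) x := by
      filter_upwards [hst.eventually hud, hsd, hs] with x h1 h2 h3
      have h4 := h1.hasGradientAt.hasFDerivAt.comp x h2.hasFDerivAt
      rw [h3.1, map_zero, ContinuousLinearMap.zero_comp] at h4
      exact h4
    obtain ⟨r, hr, hball⟩ := Metric.eventually_nhds_iff_ball.1 hder
    filter_upwards [Metric.ball_mem_nhds p hr] with x hx
    have h := (convex_ball p r).norm_image_sub_le_of_norm_hasFDerivWithin_le
      (fun y hy => (hball y hy).hasFDerivWithinAt) (C := 0) (fun y _ => by simp)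
      (Metric.mem_ball_self hr) hx
    rw [zero_mul, hsp] at h
    exact sub_eq_zero.1 (norm_le_zero_iff.1 h)
  set δ := min (-c / 4) (ε / 20) with hδ
  have hδ0 : 0 < δ := lt_min (by linarith) (by linarith)
  have hstrict : ∀ᶠ q in 𝓝 (p, p),
      ‖gradient u q.1 - gradient u q.2 - hess u p (q.1 - q.2)‖ ≤ δ * ‖q.1 - q.2‖ :=
    (hasStrictFDerivAt_gradient hu).isLittleO.def hδ0
  obtain ⟨r₁, hr₁, hball₁⟩ := Metric.eventually_nhds_iff_ball.1 hstrict
  obtain ⟨r₂, hr₂, hball₂⟩ := Metric.eventually_nhds_iff_ball.1 hud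
  have hr : 0 < min r₁ r₂ := lt_min hr₁ hr₂
  filter_upwards [hconst, hs, Metric.ball_mem_nhds p hr,
    hst.eventually (Metric.ball_mem_nhds p hr)] with x hx1 hx2 hx3 hx4
  obtain ⟨hgs, hτ⟩ := hx2
  set τ := x - s x with hτdef
  have hseg : ∀ t ∈ Icc (0 : ℝ) 1, s x + t • τ ∈ Metric.ball p (min r₁ r₂) := fun t ht =>
    (convex_ball p _).add_smul_sub_mem hx4 hx3 ht
  have hest : ∀ t ∈ Icc (0 : ℝ) 1,
      ‖gradient u (s x + t • τ) - (t * c) • τ‖ ≤ δ * (t * ‖τ‖) := by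
    intro t ht
    have h := hball₁ (s x + t • τ, s x) (by
      rw [← ball_prod_same]
      exact ⟨Metric.ball_subset_ball (min_le_left _ _) (hseg t ht),
        Metric.ball_subset_ball (min_le_left _ _) hx4⟩)
    simpa [hgs, hτ, norm_smul, abs_of_nonneg ht.1, smul_smul] using h
  have hsx : s x + τ = x := by rw [hτdef]; abel
  have hG : |‖gradient u x‖ - -c * ‖τ‖| ≤ δ * ‖τ‖ := by
    have h1 := hest 1 ⟨zero_le_one, le_rfl⟩
    rw [one_smul, one_mul, one_mul, hsx] at h1
    have h2 := abs_norm_sub_norm_le (gradient u x) (c • τ)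
    rw [norm_smul, Real.norm_eq_abs, abs_of_neg hc] at h2
    exact h2.trans h1
  have hD : |(u p - u x) - -c * ‖τ‖ ^ 2 / 2| ≤ δ * ‖τ‖ ^ 2 := by
    have h := abs_sub_le_of_gradient_on_segment (u := u) (s := s x) (τ := τ) (w := 0)
      (w' := c • τ) (C := δ * ‖τ‖ ^ 2)
      (fun t ht => hball₂ _ (Metric.ball_subset_ball (min_le_right _ _) (hseg t ht)))
      (fun t ht => by
        refine (abs_real_inner_le_norm _ _).trans ?_
        have h1 := hest t ht
        rw [← smul_smul] at h1
        rw [sub_zero]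
        have h2 : δ * (t * ‖τ‖) ≤ δ * ‖τ‖ := by
          gcongr
          exact mul_le_of_le_one_left (norm_nonneg _) ht.2
        calc _ ≤ δ * ‖τ‖ * ‖τ‖ := by gcongr; exact h1.trans h2
          _ = _ := by ring)
    rw [hsx, hx1, real_inner_smul_left, real_inner_self_eq_norm_sq, inner_zero_left] at h
    rw [abs_sub_comm] at h
    convert h using 2
    ring
  obtain ⟨h1, h2⟩ := abs_sq_sub_le_of_close (by linarith) hδ0 (min_le_left _ _) (norm_nonneg τ)
    (norm_nonneg (gradient u x)) rfl hG hD
  refine ⟨by linarith, ?_⟩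
  have h3 : 20 * δ * (u p - u x) ≤ ε * (u p - u x) := by
    have : δ ≤ ε / 20 := min_le_right _ _
    gcongr
    linarith
  have e : ‖gradient u x‖ ^ 2 - 2 * c * (u x - u p) =
    ‖gradient u x‖ ^ 2 - 2 * -c * (u p - u x) := by ring
  rw [e]
  exact h2.trans h3

end LocalForm

/-! ### Global arguments on `Ω` -/

section Global

variable {m : ℕ} {Ω U : Set (EuclideanSpace ℝ (Fin m))} {u : EuclideanSpace ℝ (Fin m) → ℝ}

/-- The set of critical points with vanishing Hessian is closed in the connected set `Ω`. It is also
open: near such a point `p` every point is critical, since noncritical points converging to `p`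
would give `0 = 1` in the limit of the arrival time equation. It misses the nonempty frontier
of `Ω`. -/
theorem hess_ne_zero_of_critical (hm : 0 < m) (hΩcomp : IsCompact Ω) (hΩconn : IsConnected Ω)
    (hcd : ∀ x ∈ Ω, ContDiffAt ℝ 2 u x) (hfr : ∀ x ∈ frontier Ω, gradient u x ≠ 0)
    (harr : ∀ x ∈ Ω,
      ⟪hess u x (gradient u x), gradient u x⟫ = (1 + lap u x) * ‖gradient u x‖ ^ 2)
    {p : EuclideanSpace ℝ (Fin m)} (hpΩ : p ∈ Ω) (hp : gradient u p = 0) : hess u p ≠ 0 := by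
  intro hp0
  have : Nonempty (Fin m) := ⟨⟨0, hm⟩⟩
  have : Nontrivial (EuclideanSpace ℝ (Fin m)) := inferInstance
  have hΩcl := hΩcomp.isClosed
  have hgc : ContinuousOn (gradient u) Ω := fun x hx =>
    (contDiffAt_gradient (hcd x hx)).continuousAt.continuousWithinAt
  have hhc : ContinuousOn (hess u) Ω := fun x hx =>
    (hess_continuousAt (hcd x hx)).continuousWithinAt
  let Z : Set (EuclideanSpace ℝ (Fin m)) :=
    (Ω ∩ gradient u ⁻¹' {0}) ∩ (Ω ∩ hess u ⁻¹' {0})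
  have hZ : IsClosed Z := (hgc.preimage_isClosed_of_isClosed hΩcl isClosed_singleton).inter
    (hhc.preimage_isClosed_of_isClosed hΩcl isClosed_singleton)
  -- Where gradient and Hessian both vanish, `u` is critical in a whole neighbourhood.
  have hopen : ∀ x ∈ Z, x ∈ interior {y | gradient u y = 0} := by
    rintro x ⟨⟨hx, hx1⟩, -, hx2⟩
    have hx1 : gradient u x = 0 := hx1
    have hx2 : hess u x = 0 := hx2
    have hxint : x ∈ interior Ω := by
      by_contra h
      exact hfr x ⟨subset_closure hx, h⟩ hx1
    have hlap : lap u x = 0 := by simp [lap, hx2]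
    have h := eventually_gradient_eq_zero (hcd x hx) (by rw [hlap]; norm_num)
      (Filter.mem_of_superset (mem_interior_iff_mem_nhds.1 hxint) harr)
    rw [mem_interior_iff_mem_nhds]
    exact h.mono fun y hy => hy (by rw [hx2]; rfl)
  obtain ⟨q, hq⟩ : (frontier Ω).Nonempty := by
    rw [Set.nonempty_iff_ne_empty]
    intro h
    rcases isClopen_iff.1 (isClopen_iff_frontier_eq_empty.2 h) with h' | h'
    · exact hΩconn.nonempty.ne_empty h'
    · exact noncompact_univ (EuclideanSpace ℝ (Fin m)) (h' ▸ hΩcomp)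
  have hqΩ : q ∈ Ω := hΩcl.frontier_subset hq
  obtain ⟨x, hxΩ, hx1, hx2⟩ := hΩconn.isPreconnected (interior {y | gradient u y = 0}) Zᶜ
    isOpen_interior hZ.isOpen_compl
    (fun x _ => by
      by_cases hx : x ∈ Z
      · exact Or.inl (hopen x hx)
      · exact Or.inr hx)
    ⟨p, hpΩ, hopen p ⟨⟨hpΩ, hp⟩, hpΩ, hp0⟩⟩
    ⟨q, hqΩ, fun h => hfr q hq h.1.2⟩
  apply hx2
  refine ⟨⟨hxΩ, interior_subset hx1⟩, hxΩ, ?_⟩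
  have h : gradient u =ᶠ[𝓝 x] fun _ => 0 := mem_interior_iff_mem_nhds.1 hx1
  have h' : hess u x = 0 := by rw [hess, h.fderiv_eq]; simp
  exact h'

theorem exists_ascent_step (hΩcomp : IsCompact Ω) (hUopen : IsOpen U) (hΩU : Ω ⊆ U)
    (hu : ContDiffOn ℝ 2 u U) : ∃ η > (0 : ℝ), ∀ x ∈ Ω,
      x + η • gradient u x ∈ U ∧
        u x + η / 2 * ‖gradient u x‖ ^ 2 ≤ u (x + η • gradient u x) := by
  have hcd : ∀ x ∈ U, ContDiffAt ℝ 2 u x := fun x hx => hu.contDiffAt (hUopen.mem_nhds hx)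
  obtain ⟨δ, hδ, hKU⟩ := hΩcomp.exists_cthickening_subset_open hUopen hΩU
  have hK : IsCompact (Metric.cthickening δ Ω) := hΩcomp.cthickening
  obtain ⟨G, hG⟩ := hΩcomp.exists_bound_of_continuousOn (f := gradient u) fun x hx =>
    (contDiffAt_gradient (hcd x (hΩU hx))).continuousAt.continuousWithinAt
  obtain ⟨M, hM⟩ := hK.exists_bound_of_continuousOn (f := hess u) fun x hx =>
    (hess_continuousAt (hcd x (hKU hx))).continuousWithinAt
  set G' := |G| + 1
  set M' := |M| + 1
  have hG' : 0 < G' := by positivity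
  have hM' : 0 < M' := by positivity
  set η := min (δ / G') (1 / (2 * M')) with hη
  have hη0 : 0 < η := lt_min (by positivity) (by positivity)
  refine ⟨η, hη0, fun x hx => ?_⟩
  have hgx : ‖gradient u x‖ ≤ G' := (hG x hx).trans ((le_abs_self G).trans (by simp [G']))
  set τ := η • gradient u x with hτ
  have hτn : ‖τ‖ = η * ‖gradient u x‖ := by rw [hτ, norm_smul, Real.norm_of_nonneg hη0.le]
  have hτδ : ‖τ‖ ≤ δ := by
    rw [hτn]
    calc η * ‖gradient u x‖ ≤ δ / G' * G' := by
          gcongr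
          exact min_le_left _ _
      _ = δ := by field_simp
  have hball : Metric.closedBall x δ ⊆ Metric.cthickening δ Ω :=
    Metric.closedBall_subset_cthickening hx δ
  have hseg : ∀ t ∈ Icc (0 : ℝ) 1, ‖t • τ‖ ≤ ‖τ‖ := fun t ht => by
    rw [norm_smul, Real.norm_of_nonneg ht.1]
    exact mul_le_of_le_one_left (norm_nonneg _) ht.2
  have hmem : ∀ t ∈ Icc (0 : ℝ) 1, x + t • τ ∈ Metric.closedBall x δ := fun t ht => by
    rw [mem_closedBall_iff_norm, add_sub_cancel_left]
    exact (hseg t ht).trans hτδ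
  have hmain := abs_sub_le_of_gradient_on_segment (u := u) (s := x) (τ := τ)
    (w := gradient u x) (w' := 0) (C := M' * ‖τ‖ ^ 2)
    (fun t ht => (hcd _ (hKU (hball (hmem t ht)))).differentiableAt (by norm_num))
    (fun t ht => by
      refine (abs_real_inner_le_norm _ _).trans ?_
      have h1 := (convex_closedBall x δ).norm_image_sub_le_of_norm_hasFDerivWithin_le
        (f := gradient u) (f' := hess u) (C := M')
        (fun y hy =>
          (hasStrictFDerivAt_gradient (hcd y (hKU (hball hy)))).hasFDerivAt.hasFDerivWithinAt)
        (fun y hy => (hM y (hball hy)).trans ((le_abs_self M).trans (by simp [M'])))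
        (Metric.mem_closedBall_self hδ.le) (hmem t ht)
      rw [add_sub_cancel_left] at h1
      rw [smul_zero, sub_zero]
      calc _ ≤ (M' * ‖τ‖) * ‖τ‖ := by
            gcongr
            exact h1.trans (by gcongr; exact hseg t ht)
        _ = _ := by ring)
  have hin : ⟪gradient u x, τ⟫ = η * ‖gradient u x‖ ^ 2 := by
    rw [hτ, real_inner_smul_right, real_inner_self_eq_norm_sq]
  rw [inner_zero_left, zero_div, sub_zero, hin, hτn] at hmain
  refine ⟨?_, ?_⟩
  · have := hmem 1 ⟨zero_le_one, le_rfl⟩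
    rw [one_smul] at this
    exact hKU (hball this)
  · have h1 := (abs_le.1 hmain).1
    have h2 : M' * η ≤ 1 / 2 := by
      calc M' * η ≤ M' * (1 / (2 * M')) := by gcongr; exact min_le_right _ _
        _ = 1 / 2 := by field_simp
    have h3 : M' * (η * ‖gradient u x‖) ^ 2 ≤ 1 / 2 * (η * ‖gradient u x‖ ^ 2) := by
      calc M' * (η * ‖gradient u x‖) ^ 2 = (M' * η) * (η * ‖gradient u x‖ ^ 2) := by ring
        _ ≤ _ := by gcongr
    linarith

theorem exists_nat_eqOn_of_preconnected {X : Type*} [TopologicalSpace X] {S : Set X}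
    (hS : IsPreconnected S) {f : X → ℝ} (hf : ContinuousOn f S)
    (hN : ∀ x ∈ S, ∃ N : ℕ, f x = N) : ∃ N : ℕ, ∀ x ∈ S, f x = N := by
  rcases S.eq_empty_or_nonempty with rfl | ⟨x₀, hx₀⟩
  · exact ⟨0, by simp⟩
  have hd : DiscreteTopology (range ((↑) : ℕ → ℝ)) :=
    (Nat.isClosedEmbedding_coe_real.isEmbedding.toHomeomorph).symm.isEmbedding.discreteTopology
  obtain ⟨_, ⟨N, rfl⟩, h⟩ := hS.eqOn_const_of_mapsTo (T := range ((↑) : ℕ → ℝ)) ⟨hd⟩ hf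
    (fun x hx => (hN x hx).imp fun _ h => h.symm) ⟨_, 0, rfl⟩
  exact ⟨N, h⟩

end Global

/-- Gradient Lojasiewicz inequality for the arrival time. -/
theorem gradient_lojasiewicz_for_arrival_time
    {n : ℕ} (hn : 1 ≤ n)
    {Ω U : Set (EuclideanSpace ℝ (Fin (n + 1)))}
    (hΩcomp : IsCompact Ω) (hΩconn : IsConnected Ω)
    (hΩreg : Ω = closure (interior Ω)) (hΩint : (interior Ω).Nonempty)
    (hUopen : IsOpen U) (hΩU : Ω ⊆ U)
    (u : EuclideanSpace ℝ (Fin (n + 1)) → ℝ) (hu : ContDiffOn ℝ 2 u U)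
    (hbdry : ∃ c : ℝ, (∀ x ∈ frontier Ω, u x = c) ∧ Ω = {x ∈ U | c ≤ u x})
    (hbdrygrad : ∀ x ∈ frontier Ω, gradient u x ≠ 0)
    (hsup : sSup (u '' Ω) = 0)
    (harrival : ∀ x ∈ Ω, gradient u x ≠ 0 →
      ⟪hess u x (gradient u x), gradient u x⟫ = (1 + lap u x) * ‖gradient u x‖ ^ 2) :
    -- (a) 0 is the only critical value
    (∀ x ∈ Ω, gradient u x = 0 → u x = 0) ∧
    -- (b) |∇u|²/(−u) → 2/(n−k) as u → 0⁻
    (∃ k : ℕ, k ≤ n - 1 ∧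
      ∀ ε > (0 : ℝ), ∃ δ > (0 : ℝ), ∀ x ∈ Ω, -δ < u x → u x < 0 →
        |‖gradient u x‖ ^ 2 / (-u x) - 2 / ((n : ℝ) - k)| < ε) ∧
    -- (c) C⁻¹ |∇u|² ≤ −u ≤ C |∇u|²
    (∃ C > (0 : ℝ), ∀ x ∈ Ω,
      C⁻¹ * ‖gradient u x‖ ^ 2 ≤ -u x ∧ -u x ≤ C * ‖gradient u x‖ ^ 2) := by
  have hcd : ∀ x ∈ Ω, ContDiffAt ℝ 2 u x := fun x hx =>
    hu.contDiffAt (hUopen.mem_nhds (hΩU hx))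
  have huc : ContinuousOn u Ω := fun x hx => (hcd x hx).continuousAt.continuousWithinAt
  have hgc : ContinuousOn (gradient u) Ω := fun x hx =>
    (contDiffAt_gradient (hcd x hx)).continuousAt.continuousWithinAt
  have harr : ∀ x ∈ Ω,
      ⟪hess u x (gradient u x), gradient u x⟫ = (1 + lap u x) * ‖gradient u x‖ ^ 2 := by
    intro x hx
    by_cases h : gradient u x = 0
    · simp [h]
    · exact harrival x hx h
  have hnhds : ∀ x ∈ Ω, gradient u x = 0 → Ω ∈ 𝓝 x := by
    intro x hx h0
    rw [← mem_interior_iff_mem_nhds]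
    by_contra h
    exact hbdrygrad x ⟨subset_closure hx, h⟩ h0
  have hstruct : ∀ p ∈ Ω, gradient u p = 0 → ∃ N : ℕ, 2 ≤ N ∧ N ≤ n + 1 ∧
      1 + lap u p = -1 / ((N : ℝ) - 1) ∧
      ∀ v, hess u p (hess u p v) = (-1 / ((N : ℝ) - 1)) • hess u p v := by
    intro p hp h0
    have h := exists_rank_of_quadratic (hess u p)
      (hess_ne_zero_of_critical n.succ_pos hΩcomp hΩconn hcd hbdrygrad harr hp h0)
      (hess_symm (hcd p hp))
      (hess_quadratic (hcd p hp) h0 (Filter.mem_of_superset (hnhds p hp h0) harr))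
    rwa [finrank_euclideanSpace_fin] at h
  have hneg : ∀ N : ℕ, 2 ≤ N → -1 / ((N : ℝ) - 1) < 0 := by
    intro N hN
    have : (2 : ℝ) ≤ N := by exact_mod_cast hN
    exact div_neg_of_neg_of_pos (by norm_num) (by linarith)
  have hlocal : ∀ p ∈ Ω, gradient u p = 0 → ∀ N : ℕ, 2 ≤ N → 1 + lap u p = -1 / ((N : ℝ) - 1) →
      (∀ v, hess u p (hess u p v) = (-1 / ((N : ℝ) - 1)) • hess u p v) → ∀ ε > (0 : ℝ),
      ∀ᶠ x in 𝓝 p, u x ≤ u p ∧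
        |‖gradient u x‖ ^ 2 - 2 * (-1 / ((N : ℝ) - 1)) * (u x - u p)| ≤ ε * (u p - u x) := by
    intro p hp h0 N hN hlap hsq ε hε
    refine local_max_and_ratio (hcd p hp) h0 (hneg N hN) hsq ?_ hε
    exact eventually_gradient_eq_zero (hcd p hp) (hlap ▸ (hneg N hN).ne)
      (Filter.mem_of_superset (hnhds p hp h0) harr)
  -- The critical set is the connected fixed point set of one step of gradient ascent.
  obtain ⟨η, hη, hstep⟩ := exists_ascent_step hΩcomp hUopen hΩU hu
  obtain ⟨c, -, hΩc⟩ := hbdry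
  have hmaps : ∀ x ∈ Ω, x + η • gradient u x ∈ Ω := by
    intro x hx
    obtain ⟨h1, h2⟩ := hstep x hx
    have h3 : c ≤ u x := (hΩc ▸ hx : x ∈ {x ∈ U | c ≤ u x}).2
    rw [hΩc]
    refine ⟨h1, h3.trans (le_trans ?_ h2)⟩
    have : 0 ≤ η / 2 * ‖gradient u x‖ ^ 2 := by positivity
    linarith
  have : CompactSpace Ω := isCompact_iff_compactSpace.1 hΩcomp
  have : ConnectedSpace Ω := isConnected_iff_connectedSpace.1 hΩconn
  let Φ : Ω → Ω := fun x => ⟨x + η • gradient u x, hmaps x x.2⟩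
  have hΦ : Continuous Φ := by
    refine Continuous.subtype_mk ?_ _
    exact continuous_subtype_val.add ((continuousOn_iff_continuous_domRestrict.1 hgc).const_smul η)
  have hfix : ∀ x : Ω, Φ x = x ↔ gradient u x = 0 := by
    intro x
    simp [Φ, Subtype.ext_iff, hη.ne']
  obtain ⟨hconn, x₀, hx₀, hx₀'⟩ := fixedPoints_connected_of_ascent Φ hΦ (fun x : Ω => u x)
    (continuousOn_iff_continuous_domRestrict.1 huc)
    (fun x => by
      have := (hstep x x.2).2
      have h : 0 ≤ η / 2 * ‖gradient u x‖ ^ 2 := by positivity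
      exact le_trans (by linarith) this)
    (fun x hx => by
      rw [hfix]
      have h := (hstep x x.2).2
      have hx : u (x + η • gradient u x) = u x := hx
      have h2 : η / 2 * ‖gradient u x‖ ^ 2 ≤ 0 := by linarith
      have h3 : ‖gradient u x‖ ^ 2 ≤ 0 := nonpos_of_mul_nonpos_right h2 (by positivity)
      simpa using le_antisymm h3 (sq_nonneg _))
    (fun x hx => by
      obtain ⟨N, hN, -, h1, h2⟩ := hstruct x x.2 ((hfix x).1 hx)
      exact (continuous_subtype_val.tendsto x).eventually
        ((hlocal x x.2 ((hfix x).1 hx) N hN h1 h2 1 one_pos).mono fun y hy => hy.1))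
  have hu0 : u x₀ = 0 := by
    have hgr : IsGreatest (u '' Ω) (u x₀) := by
      refine ⟨⟨x₀, x₀.2, rfl⟩, ?_⟩
      rintro _ ⟨x, hx, rfl⟩
      exact hx₀ ⟨x, hx⟩
    rw [← hsup, hgr.csSup_eq]
  have hle : ∀ x ∈ Ω, u x ≤ 0 := fun x hx => hu0 ▸ hx₀ ⟨x, hx⟩
  have hiff : ∀ x ∈ Ω, gradient u x = 0 ↔ u x = 0 := by
    intro x hx
    rw [← hfix ⟨x, hx⟩, hx₀', hu0]
  have hSconn : IsPreconnected {x | x ∈ Ω ∧ gradient u x = 0} := by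
    have h := hconn.image Subtype.val continuous_subtype_val.continuousOn
    convert h using 1
    ext x
    simp [hfix, and_comm]
  -- With `N` the rank of the Hessian, `1 - (1 + lap u)⁻¹ = N` at critical points, so the rank is a
  -- continuous function on the connected critical set.
  obtain ⟨N, hN⟩ := exists_nat_eqOn_of_preconnected hSconn (f := fun x => 1 - (1 + lap u x)⁻¹)
    (fun x hx => by
      obtain ⟨N, hN, -, h1, -⟩ := hstruct x hx.1 hx.2
      exact (continuousAt_const.sub (((lap_continuousAt (hcd x hx.1)).const_add 1).inv₀
        (h1 ▸ (hneg N hN).ne))).continuousWithinAt)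
    (fun x hx => by
      obtain ⟨N, hN, -, h1, -⟩ := hstruct x hx.1 hx.2
      refine ⟨N, ?_⟩
      rw [h1, inv_div]
      ring)
  have hNat : ∀ p ∈ Ω, gradient u p = 0 → 2 ≤ N ∧ N ≤ n + 1 ∧
      1 + lap u p = -1 / ((N : ℝ) - 1) ∧
      ∀ v, hess u p (hess u p v) = (-1 / ((N : ℝ) - 1)) • hess u p v := by
    intro p hp h0
    obtain ⟨N', h⟩ := hstruct p hp h0
    have h1 := hN p ⟨hp, h0⟩
    simp only [h.2.2.1, inv_div] at h1
    have h2 : N' = N := by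
      have : (N' : ℝ) = N := by rw [← h1]; ring
      exact_mod_cast this
    exact h2 ▸ h
  obtain ⟨hN2, hNn, -, -⟩ := hNat x₀ x₀.2 ((hiff x₀ x₀.2).2 hu0)
  have hN2' : (2 : ℝ) ≤ N := by exact_mod_cast hN2
  -- The local estimates, collected over the compact set of critical points, hold on a whole
  -- superlevel set of `u` close to the maximum.
  have hcoll : ∀ ε > (0 : ℝ), ∃ δ > (0 : ℝ), ∀ x ∈ Ω, -δ < u x →
      |‖gradient u x‖ ^ 2 - 2 / ((N : ℝ) - 1) * (-u x)| ≤ ε * (-u x) := by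
    intro ε hε
    let W := interior {x | |‖gradient u x‖ ^ 2 - 2 / ((N : ℝ) - 1) * (-u x)| ≤ ε * (-u x)}
    have hSW : ∀ x ∈ Ω, u x = 0 → x ∈ W := by
      intro x hx hux
      have h0 := (hiff x hx).2 hux
      obtain ⟨h1, -, h2, h3⟩ := hNat x hx h0
      rw [mem_interior_iff_mem_nhds]
      filter_upwards [hlocal x hx h0 N h1 h2 h3 ε hε] with y hy
      have h4 := hy.2
      rw [hux] at h4
      show |_| ≤ _
      convert h4 using 2 <;> ring
    have hcpt : IsCompact (Ω \ W) := hΩcomp.diff isOpen_interior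
    rcases (Ω \ W).eq_empty_or_nonempty with he | hne
    · refine ⟨1, one_pos, fun x hx _ => ?_⟩
      have hxW : x ∈ W := sdiff_eq_bot_iff.1 he hx
      have hxle := interior_subset hxW
      exact hxle
    · obtain ⟨y, hy, hymax⟩ := hcpt.exists_isMaxOn hne (huc.mono sdiff_subset)
      have hy0 : u y < 0 := lt_of_le_of_ne (hle y hy.1) fun h => hy.2 (hSW y hy.1 h)
      refine ⟨-u y, by linarith, fun x hx hux => ?_⟩
      have hxW : x ∈ W := by
        by_contra h
        have : u x ≤ u y := hymax ⟨hx, h⟩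
        linarith
      have hxle := interior_subset hxW
      exact hxle
  -- `k = n + 1 - N` is the dimension of the kernel of the Hessian; the subtraction in `ℕ` is exact
  -- because `N ≤ n + 1`.
  refine ⟨fun x hx h => (hiff x hx).1 h, ⟨n + 1 - N, by omega, fun ε hε => ?_⟩, ?_⟩
  · obtain ⟨δ, hδ, h⟩ := hcoll (ε / 2) (by linarith)
    refine ⟨δ, hδ, fun x hx h1 h2 => ?_⟩
    have h3 := h x hx h1
    have hk : (n : ℝ) - ((n + 1 - N : ℕ) : ℝ) = N - 1 := by
      rw [Nat.cast_sub hNn]; push_cast; ring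
    have hpos : 0 < -u x := by linarith
    rw [hk]
    have e : ‖gradient u x‖ ^ 2 / (-u x) - 2 / ((N : ℝ) - 1) =
        (‖gradient u x‖ ^ 2 - 2 / ((N : ℝ) - 1) * (-u x)) / (-u x) := by
      rw [sub_div, mul_div_cancel_right₀ _ hpos.ne']
    rw [e, abs_div, abs_of_pos hpos, div_lt_iff₀ hpos]
    nlinarith
  · set a := 1 / ((N : ℝ) - 1) with ha
    have ha0 : 0 < a := one_div_pos.2 (by linarith)
    obtain ⟨δ, hδ, h⟩ := hcoll a ha0
    have h2a : 2 / ((N : ℝ) - 1) = 2 * a := by rw [ha]; ring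
    -- Away from the maximum level the gradient and `u` are both bounded away from zero.
    let Z : Set (EuclideanSpace ℝ (Fin (n + 1))) := Ω ∩ u ⁻¹' Iic (-δ)
    have hZ : IsCompact Z := hΩcomp.of_isClosed_subset
      (huc.preimage_isClosed_of_isClosed hΩcomp.isClosed isClosed_Iic) inter_subset_left
    have hZu : ∀ x ∈ Z, 0 < -u x := fun x hx => by
      have : u x ≤ -δ := hx.2
      linarith
    have hZg : ∀ x ∈ Z, 0 < ‖gradient u x‖ ^ 2 := fun x hx => by
      have h1 : gradient u x ≠ 0 := fun h0 => by
        have := hZu x hx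
        rw [(hiff x hx.1).1 h0] at this
        simp at this
      positivity
    have hnc : ContinuousOn (fun x => ‖gradient u x‖ ^ 2) Z :=
      (hgc.mono inter_subset_left).norm.pow 2
    have hmc : ContinuousOn (fun x => -u x) Z := (huc.mono inter_subset_left).neg
    obtain ⟨C₁, hC₁⟩ := hZ.exists_bound_of_continuousOn (hnc.div hmc fun x hx => (hZu x hx).ne')
    obtain ⟨C₂, hC₂⟩ := hZ.exists_bound_of_continuousOn (hmc.div hnc fun x hx => (hZg x hx).ne')
    set C := |C₁| + |C₂| + a⁻¹ + 3 * a with hC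
    have hai : 0 < a⁻¹ := inv_pos.2 ha0
    have hb1 := abs_nonneg C₁
    have hb2 := abs_nonneg C₂
    have hC0 : 0 < C := by positivity
    suffices hsuff : ∀ x ∈ Ω, ‖gradient u x‖ ^ 2 ≤ C * (-u x) ∧ -u x ≤ C * ‖gradient u x‖ ^ 2 from
      ⟨C, hC0, fun x hx => ⟨(inv_mul_le_iff₀ hC0).2 (hsuff x hx).1, (hsuff x hx).2⟩⟩
    intro x hx
    have hux : 0 ≤ -u x := by linarith [hle x hx]
    rcases lt_or_ge (-δ) (u x) with hlt | hge
    · have h1 := abs_le.1 (h x hx hlt)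
      rw [h2a] at h1
      have h3 : 3 * a ≤ C := by linarith
      have h4 : a⁻¹ ≤ C := by linarith
      constructor
      · calc ‖gradient u x‖ ^ 2 ≤ 3 * a * (-u x) := by linarith
          _ ≤ C * (-u x) := by gcongr
      · calc -u x ≤ a⁻¹ * ‖gradient u x‖ ^ 2 := by
              rw [le_inv_mul_iff₀ ha0]; linarith
          _ ≤ C * ‖gradient u x‖ ^ 2 := by gcongr
    · have hxZ : x ∈ Z := ⟨hx, hge⟩
      have h1 := (le_abs_self _).trans ((hC₁ x hxZ).trans (le_abs_self C₁))
      have h2 := (le_abs_self _).trans ((hC₂ x hxZ).trans (le_abs_self C₂))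
      simp only [Pi.div_apply] at h1 h2
      rw [div_le_iff₀ (hZu x hxZ)] at h1
      rw [div_le_iff₀ (hZg x hxZ)] at h2
      constructor
      · exact h1.trans (by gcongr; linarith)
      · exact h2.trans (by gcongr; linarith)
end

section
/- (Kernel of ℒ + 1 in the Gaussian space on ℝⁿ.) Let v : ℝⁿ → ℝ be smooth with ∫_{ℝⁿ} v² e^{−|x|²/4} dx < ∞. Then ℒv + v = 0 on ℝⁿ if and only if there exist constants aᵢ (1 ≤ i ≤ n) and a_{ij} (1 ≤ i < j ≤ n) such that v(x) = Σᵢ aᵢ (xᵢ² − 2) + Σ_{i<j} a_{ij} xᵢ xⱼ for all x ∈ ℝⁿ. -/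
/-!
Differentiating an eigenfunction of the drift Laplacian lowers its eigenvalue: since
`[∂ₖ, ℒ] = -½ ∂ₖ`, a solution of `ℒu + l u = 0` satisfies `ℒ(∂ₖu) + (l - ½) ∂ₖu = 0`
(`coordL_pd`). So if `ℒv + v = 0`, then `ℒ(∂ⱼv) + ½ ∂ⱼv = 0` and `ℒ(∂ᵢ∂ⱼv) = 0`.

The Caccioppoli inequality (`caccioppoli`) shows that the Gaussian-`L²` condition passes from a
solution to its partial derivatives, so that the `∂ᵢ∂ⱼv` are drift-harmonic functions in the
Gaussian `L²` space. The same inequality with `l = 0` makes such functions constant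
(`pd_eq_zero_of_harmonic`); write `∂ᵢ∂ⱼv = cᵢⱼ`. The equation for `∂ⱼv` now reads
`∂ⱼv = Σᵢ cᵢⱼ xᵢ`, and the equation for `v` reads `v = ½ Σ cᵢⱼ xᵢ xⱼ - Σ cᵢᵢ`, with `c` symmetric,
which is the asserted form. The converse is a direct computation (`coordL_quadratic`).
-/

open Filter Set MeasureTheory
open scoped RealInnerProductSpace

/-- The drift Laplacian `ℒ v = Δv − ⟨x, ∇v⟩/2` on `ℝᵐ`. -/
noncomputable def driftL {m : ℕ} (v : EuclideanSpace ℝ (Fin m) → ℝ)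
    (x : EuclideanSpace ℝ (Fin m)) : ℝ :=
  lap v x - ⟪x, gradient v x⟫ / 2

/-! ### Partial derivatives and the drift Laplacian in coordinates -/

/-- The partial derivative of `u` in the `i`-th coordinate direction. -/
noncomputable def pd {n : ℕ} (i : Fin n) (u : EuclideanSpace ℝ (Fin n) → ℝ)
    (x : EuclideanSpace ℝ (Fin n)) : ℝ :=
  fderiv ℝ u x (EuclideanSpace.single i 1)

/-- The Gaussian weight `e^{-|x|²/4}`. -/
noncomputable def gw {n : ℕ} (x : EuclideanSpace ℝ (Fin n)) : ℝ :=
  Real.exp (-‖x‖ ^ 2 / 4)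

/-- The drift Laplacian written in coordinates: `Σ ∂ᵢ∂ᵢ u - ½ Σ xᵢ ∂ᵢ u`. -/
noncomputable def coordL {n : ℕ} (u : EuclideanSpace ℝ (Fin n) → ℝ)
    (x : EuclideanSpace ℝ (Fin n)) : ℝ :=
  ∑ i, pd i (pd i u) x - (∑ i, x i * pd i u x) / 2

section
variable {n : ℕ} {u f g : EuclideanSpace ℝ (Fin n) → ℝ}

lemma contDiff_pd (hu : ContDiff ℝ (⊤ : ℕ∞) u) (i : Fin n) :
    ContDiff ℝ (⊤ : ℕ∞) (pd i u) :=
  (hu.fderiv_right (m := (⊤ : ℕ∞)) (by simp)).clm_apply contDiff_const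

lemma smooth_diff (hu : ContDiff ℝ (⊤ : ℕ∞) u) : Differentiable ℝ u :=
  hu.differentiable (by simp)

lemma pd_add (i : Fin n) (hf : Differentiable ℝ f) (hg : Differentiable ℝ g)
    (x : EuclideanSpace ℝ (Fin n)) :
    pd i (fun y => f y + g y) x = pd i f x + pd i g x := by
  simp [pd, fderiv_fun_add (hf x) (hg x)]

lemma pd_sub (i : Fin n) (hf : Differentiable ℝ f) (hg : Differentiable ℝ g)
    (x : EuclideanSpace ℝ (Fin n)) :
    pd i (fun y => f y - g y) x = pd i f x - pd i g x := by
  simp [pd, fderiv_fun_sub (hf x) (hg x)]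

lemma pd_mul (i : Fin n) (hf : Differentiable ℝ f) (hg : Differentiable ℝ g)
    (x : EuclideanSpace ℝ (Fin n)) :
    pd i (fun y => f y * g y) x = pd i f x * g x + f x * pd i g x := by
  simp [pd, fderiv_fun_mul (hf x) (hg x)]
  ring

lemma pd_const (i : Fin n) (c : ℝ) (x : EuclideanSpace ℝ (Fin n)) :
    pd i (fun _ => c) x = 0 := by
  simp [pd]

lemma pd_coord (i j : Fin n) (x : EuclideanSpace ℝ (Fin n)) :
    pd i (fun y => y j) x = if i = j then 1 else 0 := by
  have : HasFDerivAt (fun y : EuclideanSpace ℝ (Fin n) => y j)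
      (EuclideanSpace.proj j : EuclideanSpace ℝ (Fin n) →L[ℝ] ℝ) x :=
    (EuclideanSpace.proj j : EuclideanSpace ℝ (Fin n) →L[ℝ] ℝ).hasFDerivAt
  simp [pd, this.fderiv, eq_comm]

lemma pd_sum {ι : Type*} (s : Finset ι) (i : Fin n) {F : ι → EuclideanSpace ℝ (Fin n) → ℝ}
    (hF : ∀ k, Differentiable ℝ (F k)) (x : EuclideanSpace ℝ (Fin n)) :
    pd i (fun y => ∑ k ∈ s, F k y) x = ∑ k ∈ s, pd i (F k) x := by
  simp [pd, fderiv_fun_sum (fun k _ => hF k x)]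

lemma differentiable_coord (j : Fin n) :
    Differentiable ℝ (fun y : EuclideanSpace ℝ (Fin n) => y j) :=
  (EuclideanSpace.proj j : EuclideanSpace ℝ (Fin n) →L[ℝ] ℝ).differentiable

lemma pd_comm (hu : ContDiff ℝ (⊤ : ℕ∞) u) (i j : Fin n) (x : EuclideanSpace ℝ (Fin n)) :
    pd i (pd j u) x = pd j (pd i u) x := by
  have hd : DifferentiableAt ℝ (fderiv ℝ u) x :=
    ((hu.fderiv_right (m := (⊤ : ℕ∞)) (by simp)).differentiable (by simp)) x
  have key : ∀ a b : Fin n, pd a (pd b u) x =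
      fderiv ℝ (fderiv ℝ u) x (EuclideanSpace.single a 1) (EuclideanSpace.single b 1) := by
    intro a b
    change fderiv ℝ (fun y => fderiv ℝ u y (EuclideanSpace.single b 1)) x _ = _
    rw [fderiv_clm_apply hd (differentiableAt_const _)]
    simp
  rw [key, key]
  exact (hu.contDiffAt.isSymmSndFDerivAt
    (by simpa using WithTop.coe_le_coe.2 (le_top : (2 : ℕ∞) ≤ ⊤))) _ _

lemma fderiv_apply_eq_sum (x y : EuclideanSpace ℝ (Fin n)) :
    fderiv ℝ u x y = ∑ i, y i * pd i u x := by
  conv_lhs => rw [← (EuclideanSpace.basisFun (Fin n) ℝ).sum_repr y]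
  simp [pd]

lemma eq_of_pd_eq_zero (hu : Differentiable ℝ u) (h : ∀ i x, pd i u x = 0)
    (x y : EuclideanSpace ℝ (Fin n)) : u x = u y := by
  refine is_const_of_fderiv_eq_zero (𝕜 := ℝ) hu (fun z => ?_) x y
  ext w
  simp [fderiv_apply_eq_sum, h]

/-- The invariantly defined drift Laplacian agrees with its coordinate expression. -/
lemma driftL_eq_coordL (hu : ContDiff ℝ (⊤ : ℕ∞) u) (x : EuclideanSpace ℝ (Fin n)) :
    driftL u x = coordL u x := by
  have hgi : ∀ (i : Fin n) y, gradient u y i = pd i u y := by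
    intro i y
    rw [pd, ← inner_gradient_left (𝕜 := ℝ)]
    simp [EuclideanSpace.inner_single_right, -inner_gradient_left]
  have hgd : Differentiable ℝ (gradient u) := by
    rw [differentiable_euclidean]
    intro i
    simp only [hgi]
    exact smooth_diff (contDiff_pd hu i)
  unfold driftL coordL lap
  rw [LinearMap.trace_eq_sum_inner _ (EuclideanSpace.basisFun (Fin n) ℝ)]
  congr 1
  · refine Finset.sum_congr rfl fun i _ => ?_
    have h1 : HasFDerivAt (fun y => gradient u y i)
        ((EuclideanSpace.proj i : EuclideanSpace ℝ (Fin n) →L[ℝ] ℝ).comp (hess u x)) x :=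
      (EuclideanSpace.proj i : EuclideanSpace ℝ (Fin n) →L[ℝ] ℝ).hasFDerivAt.comp x
        (hgd x).hasFDerivAt
    simp only [hgi] at h1
    rw [pd, HasFDerivAt.fderiv h1]
    simp [EuclideanSpace.inner_single_left]
  · have := inner_gradient_right (𝕜 := ℝ) (f := u) (y := x) (x := x)
    rw [this]
    simp [fderiv_apply_eq_sum]

lemma contDiff_gw : ContDiff ℝ (⊤ : ℕ∞) (gw : EuclideanSpace ℝ (Fin n) → ℝ) := by
  unfold gw
  exact Real.contDiff_exp.comp (((contDiff_norm_sq ℝ).neg).div_const 4)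

lemma pd_gw (i : Fin n) (x : EuclideanSpace ℝ (Fin n)) :
    pd i gw x = -(x i / 2) * gw x := by
  have h : HasFDerivAt (fun y : EuclideanSpace ℝ (Fin n) => Real.exp (-‖y‖ ^ 2 / 4)) _ x :=
    (((hasStrictFDerivAt_norm_sq x).hasFDerivAt.neg).mul_const (4 : ℝ)⁻¹).exp
  unfold pd gw
  have h' := h.fderiv
  simp only [div_eq_mul_inv] at h' ⊢
  rw [h']
  simp [EuclideanSpace.inner_single_right]
  ring

/-- Differentiating the eigenvalue equation lowers the eigenvalue by `1/2`, as
`[∂ₖ, ℒ] = -½ ∂ₖ`. -/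
lemma coordL_pd (hu : ContDiff ℝ (⊤ : ℕ∞) u) {l : ℝ} (h : ∀ x, coordL u x + l * u x = 0)
    (k : Fin n) (x : EuclideanSpace ℝ (Fin n)) :
    coordL (pd k u) x + (l - 1 / 2) * pd k u x = 0 := by
  have hd1 : ∀ i, Differentiable ℝ (pd i u) := fun i => smooth_diff (contDiff_pd hu i)
  have hd2 : ∀ i j, Differentiable ℝ (pd j (pd i u)) := fun i j =>
    smooth_diff (contDiff_pd (contDiff_pd hu i) j)
  have h0 : pd k (fun y => (∑ i, pd i (pd i u) y + (-1 / 2) * ∑ i, y i * pd i u y)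
      + l * u y) x = 0 := by
    have : (fun y => (∑ i, pd i (pd i u) y + (-1 / 2) * ∑ i, y i * pd i u y) + l * u y)
        = fun _ => (0 : ℝ) := by
      funext y
      rw [← h y, coordL]
      ring
    rw [this, pd_const]
  have hs1 : Differentiable ℝ (fun y => ∑ i, pd i (pd i u) y) :=
    Differentiable.fun_sum fun i _ => hd2 i i
  have hxm : ∀ i : Fin n, Differentiable ℝ (fun y => y i * pd i u y) := fun i =>
    (differentiable_coord i).fun_mul (hd1 i)
  have hs2 : Differentiable ℝ (fun y : EuclideanSpace ℝ (Fin n) => ∑ i, y i * pd i u y) :=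
    Differentiable.fun_sum fun i _ => hxm i
  have hu' := smooth_diff hu
  rw [pd_add k (hs1.fun_add (hs2.const_mul _)) (hu'.const_mul _),
    pd_add k hs1 (hs2.const_mul _), pd_mul k (differentiable_const _) hs2,
    pd_mul k (differentiable_const _) hu', pd_sum _ k (fun i => hd2 i i), pd_sum _ k hxm] at h0
  simp only [pd_const, pd_mul k (differentiable_coord _) (hd1 _), pd_coord,
    Finset.sum_add_distrib, ite_mul, one_mul, zero_mul, Finset.sum_ite_eq, Finset.mem_univ,
    if_true, zero_add] at h0
  have e2 : ∀ i y, pd k (pd i u) y = pd i (pd k u) y := fun i y => pd_comm hu k i y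
  have e3 : ∀ i, pd k (pd i (pd i u)) x = pd i (pd i (pd k u)) x := by
    intro i
    rw [pd_comm (contDiff_pd hu i) k i, funext (e2 i)]
  simp only [e2, e3] at h0
  unfold coordL
  linarith

/-! ### Cutoffs and the weighted gradient estimate -/

/-- Compactly supported smooth cutoffs, equal to `1` on the ball of radius `R`, with squared
partial derivatives at most `C / R²`, where `C` does not depend on `R`. -/
lemma exists_cutoff (n : ℕ) : ∃ C : ℝ, ∀ R : ℝ, 0 < R →
    ∃ φ : EuclideanSpace ℝ (Fin n) → ℝ, ContDiff ℝ (⊤ : ℕ∞) φ ∧ HasCompactSupport φ ∧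
      (∀ x ∈ Metric.ball (0 : EuclideanSpace ℝ (Fin n)) R, φ x = 1) ∧
      (∀ x, φ x ^ 2 ≤ 1) ∧ ∀ i x, (pd i φ x) ^ 2 ≤ C / R ^ 2 := by
  let b : ContDiffBump (0 : EuclideanSpace ℝ (Fin n)) := ⟨1, 2, by norm_num, by norm_num⟩
  have hb : ContDiff ℝ (⊤ : ℕ∞) b := b.contDiff
  obtain ⟨C, hC⟩ := (b.hasCompactSupport.fderiv ℝ).exists_bound_of_continuous
    (hb.continuous_fderiv (by simp))
  refine ⟨C ^ 2, fun R hR => ⟨fun x => b (R⁻¹ • x), hb.comp (contDiff_const_smul _), ?_, ?_, ?_,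
    ?_⟩⟩
  · exact b.hasCompactSupport.comp_smul (inv_ne_zero hR.ne')
  · intro x hx
    refine b.one_of_mem_closedBall ?_
    simp only [Metric.mem_ball, dist_zero_right] at hx
    simp only [Metric.mem_closedBall, dist_zero_right, norm_smul, norm_inv, Real.norm_eq_abs,
      abs_of_pos hR, b]
    rw [inv_mul_le_iff₀ hR]
    linarith
  · intro x
    exact pow_le_one₀ b.nonneg b.le_one
  · intro i x
    have h1 : pd i (fun x => b (R⁻¹ • x)) x = R⁻¹ * pd i b (R⁻¹ • x) := by
      unfold pd
      rw [fderiv_comp_smul]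
      simp
    have h2 : |pd i b (R⁻¹ • x)| ≤ C := by
      have := (fderiv ℝ b (R⁻¹ • x)).le_opNorm (EuclideanSpace.single i 1)
      simp only [PiLp.norm_single, norm_one, mul_one] at this
      exact this.trans (hC _)
    rw [h1, mul_pow, inv_pow, div_eq_inv_mul]
    have := sq_le_sq' (neg_le_of_abs_le h2) (le_of_abs_le h2)
    gcongr

lemma integral_pd_eq_zero (hg : ContDiff ℝ (⊤ : ℕ∞) g) (hc : HasCompactSupport g) (i : Fin n) :
    Integrable (pd i g) ∧ ∫ x, pd i g x = 0 := by
  have hc' : HasCompactSupport (pd i g) := hc.fderiv_apply ℝ _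
  have hi : Integrable (pd i g) := (contDiff_pd hg i).continuous.integrable_of_hasCompactSupport hc'
  refine ⟨hi, ?_⟩
  have := integral_mul_fderiv_eq_neg_fderiv_mul_of_integrable (μ := volume)
    (f := fun _ : EuclideanSpace ℝ (Fin n) => (1 : ℝ)) (g := g) (v := EuclideanSpace.single i 1)
    (by simp) (by simpa using! hi)
    (by simpa using hg.continuous.integrable_of_hasCompactSupport hc)
    (fun _ _ => differentiableAt_const _) (fun x _ => smooth_diff hg x)
  simpa using! this

/-- Caccioppoli inequality: a smooth Gaussian-`L²` solution of `ℒu + l u = 0` has Gaussian-`L²`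
partial derivatives, whose squared norm is at most `2 |l|` times that of `u`. It comes from
integrating the divergence of `φ² u ∇u e^{-|x|²/4}` for cutoffs `φ` at scale `R → ∞`. -/
lemma caccioppoli (hu : ContDiff ℝ (⊤ : ℕ∞) u) {l : ℝ}
    (h : ∀ x, coordL u x + l * u x = 0) (hi : Integrable (fun x => u x ^ 2 * gw x)) (k : Fin n) :
    Integrable (fun x => pd k u x ^ 2 * gw x) ∧
      ∫ x, pd k u x ^ 2 * gw x ≤ 2 * |l| * ∫ x, u x ^ 2 * gw x := by
  obtain ⟨C, hC⟩ := exists_cutoff n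
  have hwpos : ∀ x : EuclideanSpace ℝ (Fin n), 0 < gw x := fun x => Real.exp_pos _
  have hcont : Continuous (fun x => pd k u x ^ 2 * gw x) :=
    ((contDiff_pd hu k).continuous.pow 2).mul contDiff_gw.continuous
  set I := ∫ x, u x ^ 2 * gw x with hI
  have hbound : ∀ R : ℝ, 0 < R → ∫ x in Metric.ball 0 R, pd k u x ^ 2 * gw x ≤
      (2 * |l| + 4 * (n * (C / R ^ 2))) * I := by
    intro R hR
    obtain ⟨φ, hφ, hφc, hφ1, hφle, hφd⟩ := hC R hR
    let G : Fin n → EuclideanSpace ℝ (Fin n) → ℝ := fun i y =>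
      φ y * (φ y * (u y * (pd i u y * gw y)))
    have hG : ∀ i, ContDiff ℝ (⊤ : ℕ∞) (G i) := fun i =>
      hφ.mul (hφ.mul (hu.mul ((contDiff_pd hu i).mul contDiff_gw)))
    have hGc : ∀ i, HasCompactSupport (G i) := fun i => hφc.mul_right
    have hGd : ∀ i x, pd i (G i) x = gw x * (φ x ^ 2 * pd i u x ^ 2
        + φ x ^ 2 * u x * (pd i (pd i u) x - x i * pd i u x / 2)
        + 2 * φ x * u x * pd i φ x * pd i u x) := by
      intro i x
      have d1 := smooth_diff (contDiff_pd hu i)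
      have d2 : Differentiable ℝ (gw : EuclideanSpace ℝ (Fin n) → ℝ) := smooth_diff contDiff_gw
      have d3 := smooth_diff hu
      have d4 := smooth_diff hφ
      have d5 := d1.fun_mul d2
      have d6 := d3.fun_mul d5
      rw [pd_mul i d4 (d4.fun_mul d6), pd_mul i d4 d6, pd_mul i d3 d5, pd_mul i d1 d2, pd_gw]
      ring
    have hpt : ∀ x, (Metric.ball 0 R).indicator (fun x => pd k u x ^ 2 * gw x) x ≤
        2 * ∑ i, pd i (G i) x + (2 * |l| + 4 * (n * (C / R ^ 2))) * (u x ^ 2 * gw x) := by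
      intro x
      have hL : ∑ i, (pd i (pd i u) x - x i * pd i u x / 2) = -(l * u x) := by
        rw [Finset.sum_sub_distrib, ← Finset.sum_div]
        have := h x
        unfold coordL at this
        linarith
      have e1 : 2 * ∑ i, pd i (G i) x = gw x * (2 * (φ x ^ 2 * ∑ i, pd i u x ^ 2)
          - 2 * l * (φ x ^ 2 * u x ^ 2) + ∑ i, 4 * φ x * u x * pd i φ x * pd i u x) := by
        simp only [hGd, ← Finset.mul_sum, Finset.sum_add_distrib, hL]
        have : ∑ i, 4 * φ x * u x * pd i φ x * pd i u x
            = 2 * ∑ i, 2 * φ x * u x * pd i φ x * pd i u x := by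
          rw [Finset.mul_sum]
          exact Finset.sum_congr rfl fun i _ => by ring
        rw [this]
        ring
      -- completing the square absorbs the cross term
      have e2 : -(φ x ^ 2 * ∑ i, pd i u x ^ 2) - 4 * u x ^ 2 * (n * (C / R ^ 2)) ≤
          ∑ i, 4 * φ x * u x * pd i φ x * pd i u x := by
        have hs : ∑ i : Fin n, (-(φ x ^ 2 * pd i u x ^ 2) - 4 * u x ^ 2 * (C / R ^ 2)) ≤
            ∑ i, 4 * φ x * u x * pd i φ x * pd i u x := by
          refine Finset.sum_le_sum fun i _ => ?_
          have a1 := sq_nonneg (φ x * pd i u x + 2 * (u x * pd i φ x))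
          have a2 := mul_le_mul_of_nonneg_left (hφd i x) (sq_nonneg (u x))
          nlinarith
        rw [Finset.sum_sub_distrib, Finset.sum_neg_distrib, ← Finset.mul_sum] at hs
        simp only [Finset.sum_const, Finset.card_univ, Fintype.card_fin, nsmul_eq_mul] at hs
        linarith
      have e3 : l * (φ x ^ 2 * u x ^ 2) ≤ |l| * u x ^ 2 := by
        have b1 : φ x ^ 2 * u x ^ 2 ≤ u x ^ 2 :=
          mul_le_of_le_one_left (sq_nonneg _) (hφle x)
        calc l * (φ x ^ 2 * u x ^ 2) ≤ |l| * (φ x ^ 2 * u x ^ 2) :=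
              mul_le_mul_of_nonneg_right (le_abs_self l) (by positivity)
          _ ≤ _ := mul_le_mul_of_nonneg_left b1 (abs_nonneg l)
      have e4 : gw x * (φ x ^ 2 * ∑ i, pd i u x ^ 2) ≤
          2 * ∑ i, pd i (G i) x + (2 * |l| + 4 * (n * (C / R ^ 2))) * (u x ^ 2 * gw x) := by
        rw [e1]
        have := mul_le_mul_of_nonneg_left (show φ x ^ 2 * ∑ i, pd i u x ^ 2 ≤
          (2 * (φ x ^ 2 * ∑ i, pd i u x ^ 2)
          - 2 * l * (φ x ^ 2 * u x ^ 2) + ∑ i, 4 * φ x * u x * pd i φ x * pd i u x)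
          + (2 * |l| + 4 * (n * (C / R ^ 2))) * u x ^ 2 by linarith) (hwpos x).le
        linarith
      refine le_trans ?_ e4
      by_cases hx : x ∈ Metric.ball (0 : EuclideanSpace ℝ (Fin n)) R
      · rw [indicator_of_mem hx, hφ1 x hx, mul_comm]
        have : pd k u x ^ 2 ≤ ∑ i, pd i u x ^ 2 :=
          Finset.single_le_sum (f := fun i => pd i u x ^ 2) (fun i _ => sq_nonneg _)
            (Finset.mem_univ k)
        have := mul_le_mul_of_nonneg_left this (hwpos x).le
        linarith
      · rw [indicator_of_notMem hx]
        exact mul_nonneg (hwpos x).le (mul_nonneg (sq_nonneg _)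
          (Finset.sum_nonneg fun i _ => sq_nonneg _))
    have hGi : Integrable (fun x => 2 * ∑ i, pd i (G i) x) :=
      (integrable_finsetSum _ fun i _ => (integral_pd_eq_zero (hG i) (hGc i) i).1).const_mul 2
    rw [← integral_indicator Metric.isOpen_ball.measurableSet]
    calc _ ≤ ∫ x, (2 * ∑ i, pd i (G i) x
          + (2 * |l| + 4 * (n * (C / R ^ 2))) * (u x ^ 2 * gw x)) := by
          refine integral_mono_of_nonneg (ae_of_all _ fun x => ?_) (hGi.add (hi.const_mul _))
            (ae_of_all _ hpt)
          exact indicator_nonneg (fun y _ => mul_nonneg (sq_nonneg _) (hwpos y).le) x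
      _ = _ := by
          rw [integral_add hGi (hi.const_mul _), integral_const_mul, integral_const_mul,
            integral_finsetSum _ fun i _ => (integral_pd_eq_zero (hG i) (hGc i) i).1]
          simp [(integral_pd_eq_zero (hG _) (hGc _) _).2, hI]
  have hlim : Tendsto (fun R : ℝ => (2 * |l| + 4 * (n * (C / R ^ 2))) * I) atTop
      (nhds (2 * |l| * I)) := by
    have h0 : Tendsto (fun R : ℝ => C / R ^ 2) atTop (nhds 0) :=
      tendsto_const_nhds.div_atTop (tendsto_pow_atTop two_ne_zero)
    simpa using ((((h0.const_mul (n : ℝ)).const_mul 4).const_add (2 * |l|)).mul_const I)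
  have hcov : AECover (volume : Measure (EuclideanSpace ℝ (Fin n))) atTop
      (fun R : ℝ => Metric.ball 0 R) := aecover_ball tendsto_id
  have hint : Integrable (fun x => pd k u x ^ 2 * gw x) := by
    refine hcov.integrable_of_integral_bounded_of_nonneg_ae (2 * |l| * I + 1)
      (fun R => ?_) (ae_of_all _ fun x => mul_nonneg (sq_nonneg _) (hwpos x).le) ?_
    · exact (hcont.continuousOn.integrableOn_compact
        (isCompact_closedBall 0 R)).mono_set Metric.ball_subset_closedBall
    · filter_upwards [hlim.eventually_le_const (lt_add_one _), eventually_gt_atTop 0]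
        with R hR hR0
      exact (hbound R hR0).trans hR
  refine ⟨hint, ?_⟩
  refine le_of_tendsto_of_tendsto (hcov.integral_tendsto_of_countably_generated hint) hlim ?_
  filter_upwards [eventually_gt_atTop 0] with R hR using hbound R hR

/-- Liouville property, the case `l = 0` of the Caccioppoli inequality: a smooth
Gaussian-`L²` solution of `ℒu = 0` has vanishing derivatives. -/
lemma pd_eq_zero_of_harmonic (hu : ContDiff ℝ (⊤ : ℕ∞) u) (h : ∀ x, coordL u x = 0)
    (hi : Integrable (fun x => u x ^ 2 * gw x)) (k : Fin n) (x : EuclideanSpace ℝ (Fin n)) :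
    pd k u x = 0 := by
  obtain ⟨h1, h2⟩ := caccioppoli hu (l := 0) (by simpa using h) hi k
  have hwpos : ∀ x : EuclideanSpace ℝ (Fin n), 0 < gw x := fun x => Real.exp_pos _
  have hnn : ∀ y, 0 ≤ pd k u y ^ 2 * gw y := fun y => mul_nonneg (sq_nonneg _) (hwpos y).le
  have h3 : ∫ y, pd k u y ^ 2 * gw y = 0 :=
    le_antisymm (by simpa using h2) (integral_nonneg hnn)
  rw [integral_eq_zero_iff_of_nonneg hnn h1] at h3
  have hcont : Continuous (fun x => pd k u x ^ 2 * gw x) :=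
    ((contDiff_pd hu k).continuous.pow 2).mul contDiff_gw.continuous
  have h4 := (hcont.ae_eq_iff_eq volume continuous_const).1 h3
  have h5 : pd k u x ^ 2 * gw x = 0 := congrFun h4 x
  simpa [(hwpos x).ne'] using h5

/-! ### Quadratic polynomials -/

/-- A square double sum, split into its diagonal and the pairs `i < j`, where the two
entries of each pair are collected. -/
lemma sum_sum_split (F : Fin n → Fin n → ℝ) :
    ∑ i, ∑ j, F i j = ∑ i, F i i + ∑ i, ∑ j, if i < j then F i j + F j i else 0 := by
  have h1 : ∀ i j : Fin n, F i j = (if i = j then F i j else 0) + (if i < j then F i j else 0)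
      + (if j < i then F i j else 0) := by
    intro i j
    rcases lt_trichotomy i j with h | h | h
    · simp [h, h.ne, h.not_gt]
    · simp [h]
    · simp [h, h.ne', h.not_gt]
  have h2 : ∑ i, ∑ j, (if j < i then F i j else 0) = ∑ i, ∑ j, (if i < j then F j i else 0) :=
    Finset.sum_comm
  have h3 : ∀ i j : Fin n, (if i < j then F i j + F j i else 0)
      = (if i < j then F i j else 0) + (if i < j then F j i else 0) := by
    intro i j
    split_ifs <;> simp
  simp only [h3]
  conv_lhs => enter [2, i, 2, j]; rw [h1 i j]
  simp only [Finset.sum_add_distrib, h2, Finset.sum_ite_eq, Finset.mem_univ, if_true]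
  ring

/-- The quadratic polynomials `Σ Mᵢⱼ xᵢ xⱼ - 2 tr M` solve `ℒu + u = 0`. -/
lemma coordL_quadratic (M : Fin n → Fin n → ℝ) (c : ℝ)
    (hu : ∀ x, u x = ∑ i, ∑ j, M i j * (x i * x j) + c) (hc : c = -2 * ∑ i, M i i)
    (x : EuclideanSpace ℝ (Fin n)) : coordL u x + u x = 0 := by
  have hD : ∀ i j : Fin n, Differentiable ℝ
      (fun y : EuclideanSpace ℝ (Fin n) => M i j * (y i * y j)) := fun i j =>
    ((differentiable_coord i).fun_mul (differentiable_coord j)).const_mul _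
  have hS : ∀ i : Fin n, Differentiable ℝ
      (fun y : EuclideanSpace ℝ (Fin n) => ∑ j, M i j * (y i * y j)) := fun i =>
    Differentiable.fun_sum fun j _ => hD i j
  have hM : ∀ (a : Fin n → ℝ) (j : Fin n), Differentiable ℝ
      (fun y : EuclideanSpace ℝ (Fin n) => a j * y j) := fun a j =>
    (differentiable_coord j).const_mul _
  have h1 : ∀ k, pd k u = fun y => ∑ j, (M k j + M j k) * y j := by
    intro k
    funext y
    rw [funext hu, pd_add k (Differentiable.fun_sum fun i _ => hS i) (differentiable_const _),
      pd_const, pd_sum _ k hS]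
    simp only [pd_sum _ k (hD _), pd_mul k (differentiable_const _)
      ((differentiable_coord _).fun_mul (differentiable_coord _)), pd_const,
      pd_mul k (differentiable_coord _) (differentiable_coord _), pd_coord]
    simp only [zero_mul, zero_add, add_zero, mul_add, add_mul, Finset.sum_add_distrib, ite_mul,
      mul_ite, one_mul, mul_one, mul_zero, Finset.sum_ite_eq, Finset.mem_univ, if_true]
    congr 1
    rw [Finset.sum_comm]
    simp
  have h2 : ∀ k, pd k (pd k u) x = 2 * M k k := by
    intro k
    rw [h1, pd_sum _ k (fun j => hM (fun j => M k j + M j k) j)]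
    simp only [pd_mul k (differentiable_const _) (differentiable_coord _), pd_const, pd_coord]
    simp
    ring
  unfold coordL
  simp only [h2]
  simp only [h1, hu, hc, Finset.mul_sum]
  have h3 : ∑ i, ∑ j, x i * ((M i j + M j i) * x j) = 2 * ∑ i, ∑ j, M i j * (x i * x j) := by
    have : ∑ i, ∑ j, M j i * (x j * x i) = ∑ i, ∑ j, M i j * (x i * x j) := Finset.sum_comm
    rw [two_mul]
    conv_rhs => enter [2]; rw [← this]
    simp only [← Finset.sum_add_distrib]
    exact Finset.sum_congr rfl fun i _ => Finset.sum_congr rfl fun j _ => by ring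
  rw [h3, ← Finset.mul_sum, ← Finset.mul_sum]
  ring

end

/-! ### Gaussian solutions are quadratic -/

/-- Kernel of `ℒ + 1` in the Gaussian space on `ℝⁿ`. -/
theorem kernel_of_drift_laplacian_plus_one
    {n : ℕ} (hn : 1 ≤ n)
    (v : EuclideanSpace ℝ (Fin n) → ℝ) (hv : ContDiff ℝ (⊤ : ℕ∞) v)
    (hint : Integrable (fun x : EuclideanSpace ℝ (Fin n) =>
      v x ^ 2 * Real.exp (-‖x‖ ^ 2 / 4))) :
    (∀ x, driftL v x + v x = 0) ↔
      ∃ (a : Fin n → ℝ) (b : Fin n → Fin n → ℝ),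
        ∀ x : EuclideanSpace ℝ (Fin n),
          v x = (∑ i, a i * (x i ^ 2 - 2)) +
            ∑ i, ∑ j, if i < j then b i j * x i * x j else 0 := by
  simp only [driftL_eq_coordL hv]
  constructor
  · intro h
    have d1 : ∀ j, ContDiff ℝ (⊤ : ℕ∞) (pd j v) := contDiff_pd hv
    have d2 : ∀ i j, ContDiff ℝ (⊤ : ℕ∞) (pd i (pd j v)) := fun i j => contDiff_pd (d1 j) i
    have h0 : ∀ x, coordL v x + 1 * v x = 0 := by simpa using h
    have h1 : ∀ j x, coordL (pd j v) x + (1 - 1 / 2) * pd j v x = 0 := coordL_pd hv h0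
    have h2 : ∀ i j x, coordL (pd i (pd j v)) x = 0 := by
      intro i j x
      have := coordL_pd (d1 j) (h1 j) i x
      norm_num at this
      exact this
    have i1 : ∀ j, Integrable (fun x => pd j v x ^ 2 * gw x) := fun j =>
      (caccioppoli hv h0 hint j).1
    have i2 : ∀ i j, Integrable (fun x => pd i (pd j v) x ^ 2 * gw x) := fun i j =>
      (caccioppoli (d1 j) (h1 j) (i1 j) i).1
    have h3 : ∀ k i j x, pd k (pd i (pd j v)) x = 0 := fun k i j x =>
      pd_eq_zero_of_harmonic (d2 i j) (h2 i j) (i2 i j) k x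
    let c : Fin n → Fin n → ℝ := fun i j => pd i (pd j v) 0
    have hc : ∀ i j x, pd i (pd j v) x = c i j := fun i j x =>
      eq_of_pd_eq_zero (smooth_diff (d2 i j)) (fun k y => h3 k i j y) x 0
    -- the equation for `∂ⱼ v`, whose second derivatives vanish, determines `∂ⱼ v`
    have h4 : ∀ j x, pd j v x = ∑ i, x i * c i j := by
      intro j x
      have := h1 j x
      simp only [coordL, h3, hc, Finset.sum_const_zero] at this
      linarith
    have h5 : ∀ x, v x = ∑ i, ∑ j, c i j / 2 * (x i * x j) - ∑ i, c i i := by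
      intro x
      have := h x
      simp only [coordL, hc] at this
      simp only [h4] at this
      have e : ∑ i, ∑ j, c i j / 2 * (x i * x j) = (∑ j, x j * ∑ i, x i * c i j) / 2 := by
        rw [Finset.sum_comm, Finset.sum_div]
        refine Finset.sum_congr rfl fun j _ => ?_
        rw [Finset.mul_sum, Finset.sum_div]
        exact Finset.sum_congr rfl fun i _ => by ring
      linarith
    have hsymm : ∀ i j, c i j = c j i := fun i j => pd_comm hv i j 0
    refine ⟨fun i => c i i / 2, c, fun x => ?_⟩
    rw [h5, sum_sum_split]
    have e1 : ∑ i, c i i / 2 * (x i ^ 2 - 2) = ∑ i, c i i / 2 * (x i * x i) - ∑ i, c i i := by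
      rw [← Finset.sum_sub_distrib]
      exact Finset.sum_congr rfl fun i _ => by ring
    have e2 : ∀ i j, c i j / 2 * (x i * x j) + c j i / 2 * (x j * x i) = c i j * x i * x j := by
      intro i j
      rw [hsymm j i]
      ring
    simp only [e1, e2]
    ring
  · rintro ⟨a, b, hab⟩ x
    let M : Fin n → Fin n → ℝ := fun i j => if i = j then a i else if i < j then b i j else 0
    refine coordL_quadratic M (-2 * ∑ i, M i i) (fun y => ?_) rfl x
    rw [hab, sum_sum_split fun i j => M i j * (y i * y j)]
    have e1 : ∀ i, M i i = a i := fun i => by simp [M]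
    have e2 : ∀ i j, (if i < j then M i j * (y i * y j) + M j i * (y j * y i) else 0)
        = if i < j then b i j * y i * y j else 0 := by
      intro i j
      split_ifs with hij
      · simp [M, hij, hij.ne, hij.ne', hij.not_gt]
        ring
      · rfl
    have e3 : ∑ i, a i * (y i ^ 2 - 2) = ∑ i, a i * (y i * y i) + -2 * ∑ i, a i := by
      rw [Finset.mul_sum, ← Finset.sum_add_distrib]
      exact Finset.sum_congr rfl fun i _ => by ring
    simp only [e1, e2, e3]
    ring
end

section
/- Let u : ℝⁿ → ℝ be C², let V : ℝⁿ → ℝ be continuous, and suppose Δu − ⟨x, ∇u⟩/2 + V u = 0 on ℝⁿ. Then for every r > 0, ∫_{∂B_r} u ∂_r u dσ = e^{r²/4} ∫_{B_r} ( |∇u|² − V u² ) e^{−|x|²/4} dx; equivalently, D(r) = r^{2−n} e^{r²/4} ∫_{B_r} ( |∇u|² − V u² ) e^{−|x|²/4} dx, where B_r is the open ball of radius r centered at the origin. -/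
/-!
Write `w(x) = e^{-|x|²/4}`. The equation says that the field `F = u w ∇u` has divergence
`div F = w (|∇u|² + u (Δu − ⟨x, ∇u⟩/2)) = w (|∇u|² − V u²)` (`divergence_weighted`), and its normal
component on `∂B_r` is `e^{-r²/4} u ∂_r u`. The identity is therefore the divergence theorem for
`F` on `B_r`.

The divergence theorem on a ball, `integral_ball_divergence`, is derived here from the fact that a
compactly supported `C¹` field has total divergence zero (`integral_divergence_eq_zero`, integration
by parts in each coordinate). Applied to radial cutoffs of `F` and rewritten in polar coordinates
(`integral_ball_eq_integral_sphere`), that fact says that the flux `b(s)` through `∂B_s` and the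
integral `a(s)` of `div F` over `B_s` agree against all test functions of `s`; both are continuous,
so they coincide.
-/

open Filter Set MeasureTheory
open scoped RealInnerProductSpace

/-- The surface integral `∫_{∂B_r} g dσ` over the sphere of radius `r > 0` centered at the
origin of `ℝᵐ`, expressed by scaling the canonical surface measure (`volume.toSphere`)
of the unit sphere: `∫_{∂B_r} g dσ = r^{m−1} ∫_{∂B_1} g(rω) dσ₁(ω)`. -/
noncomputable def sphereIntegral {m : ℕ} (g : EuclideanSpace ℝ (Fin m) → ℝ) (r : ℝ) : ℝ :=
  r ^ ((m : ℤ) - 1) * ∫ ω : Metric.sphere (0 : EuclideanSpace ℝ (Fin m)) 1,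
    g (r • (ω : EuclideanSpace ℝ (Fin m)))
      ∂(volume : Measure (EuclideanSpace ℝ (Fin m))).toSphere

/-- The radial derivative `∂_r u (x) = ⟨∇u(x), x/|x|⟩`. -/
noncomputable def radialDeriv {m : ℕ} (u : EuclideanSpace ℝ (Fin m) → ℝ)
    (x : EuclideanSpace ℝ (Fin m)) : ℝ :=
  ⟪gradient u x, ‖x‖⁻¹ • x⟫

/-- `I(r) = r^{1−m} ∫_{∂B_r} u² dσ`. -/
noncomputable def freqI {m : ℕ} (u : EuclideanSpace ℝ (Fin m) → ℝ) (r : ℝ) : ℝ :=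
  r ^ (1 - (m : ℤ)) * sphereIntegral (fun x => u x ^ 2) r

/-- `D(r) = r^{2−m} ∫_{∂B_r} u ∂_r u dσ`. -/
noncomputable def freqD {m : ℕ} (u : EuclideanSpace ℝ (Fin m) → ℝ) (r : ℝ) : ℝ :=
  r ^ (2 - (m : ℤ)) * sphereIntegral (fun x => u x * radialDeriv u x) r

/-- Polar coordinates on the ball `B_R` for a continuous integrand. -/
lemma integral_ball_eq_integral_sphere {E : Type*} [NormedAddCommGroup E] [NormedSpace ℝ E]
    [FiniteDimensional ℝ E] [Nontrivial E] [MeasureSpace E] [BorelSpace E]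
    [(volume : Measure E).IsAddHaarMeasure] {f : E → ℝ}
    (hf : Continuous f) {R : ℝ} (hR : 0 < R) :
    ∫ x in Metric.ball (0 : E) R, f x
      = ∫ s in (0 : ℝ)..R, s ^ (Module.finrank ℝ E - 1) *
        ∫ ω : Metric.sphere (0 : E) 1,
          f (s • (ω : E))
          ∂(volume : Measure (E)).toSphere := by
  set g : E → ℝ := (Metric.ball (0 : E) R).indicator f with hg
  have hgi : Integrable g := by
    rw [hg, integrable_indicator_iff Metric.isOpen_ball.measurableSet]
    exact (hf.continuousOn.integrableOn_compact (isCompact_closedBall (0 : E) R)).mono_set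
      Metric.ball_subset_closedBall
  have mp := (volume : Measure E).measurePreserving_homeomorphUnitSphereProd
  have me : MeasurableEmbedding (homeomorphUnitSphereProd E) := Homeomorph.measurableEmbedding _
  set G : Metric.sphere (0 : E) 1 × Ioi (0 : ℝ) → ℝ := fun p => g ((p.2 : ℝ) • (p.1 : E)) with hG
  have hcomp : ∀ x : ({0}ᶜ : Set E), G (homeomorphUnitSphereProd E x) = g x := by
    intro x
    have hx : ‖(x : E)‖ ≠ 0 := norm_ne_zero_iff.2 x.2
    simp [hG, smul_smul, hx]
  have h1 : ∫ x, g x = ∫ p, G p ∂((volume : Measure E).toSphere.prod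
      (Measure.volumeIoiPow (Module.finrank ℝ E - 1))) := by
    rw [← mp.integral_comp me]
    simp_rw [hcomp]
    rw [integral_subtype_comap (measurableSet_singleton (0 : E)).compl fun x ↦ g x,
      ← integral_indicator (measurableSet_singleton (0 : E)).compl]
    refine integral_congr_ae ?_
    have : ∀ᵐ x : E, x ∈ ({0}ᶜ : Set E) := by
      simp [ae_iff]
    filter_upwards [this] with x hx
    simp [indicator_of_mem hx]
  have h2 : Integrable G ((volume : Measure E).toSphere.prod
      (Measure.volumeIoiPow (Module.finrank ℝ E - 1))) := by
    rw [← mp.integrable_comp_emb me]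
    have : G ∘ homeomorphUnitSphereProd E = g ∘ ((↑) : ({0}ᶜ : Set E) → E) := funext hcomp
    rw [this, ← integrableOn_iff_comap_subtypeVal (measurableSet_singleton (0 : E)).compl]
    exact hgi.integrableOn
  rw [← integral_indicator Metric.isOpen_ball.measurableSet, h1, integral_prod_symm G h2]
  simp only [Measure.volumeIoiPow, ENNReal.ofReal]
  rw [integral_withDensity_eq_integral_smul (by fun_prop)]
  rw [integral_subtype_comap measurableSet_Ioi
    (fun s : ℝ ↦ Real.toNNReal (s ^ (Module.finrank ℝ E - 1)) •
      ∫ ω : Metric.sphere (0 : E) 1, g (s • (ω : E)) ∂(volume : Measure E).toSphere),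
    intervalIntegral.integral_of_le hR.le, integral_Ioc_eq_integral_Ioo,
    ← integral_indicator measurableSet_Ioi, ← integral_indicator measurableSet_Ioo]
  congr 1
  ext s
  by_cases hs : 0 < s
  · have hnorm : ∀ ω : Metric.sphere (0 : E) 1, ‖s • (ω : E)‖ = s := by
      intro ω
      rw [norm_smul, norm_eq_of_mem_sphere, mul_one, Real.norm_of_nonneg hs.le]
    rw [indicator_of_mem (show s ∈ Ioi 0 from hs), NNReal.smul_def,
      Real.coe_toNNReal _ (by positivity), smul_eq_mul]
    by_cases hsR : s < R
    · rw [indicator_of_mem (show s ∈ Ioo 0 R from ⟨hs, hsR⟩)]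
      congr 2
      ext ω
      rw [hg, indicator_of_mem]
      simp only [mem_ball_zero_iff, hnorm, hsR]
    · rw [indicator_of_notMem (fun h : s ∈ Ioo 0 R => hsR h.2)]
      have : ∀ ω : Metric.sphere (0 : E) 1, g (s • (ω : E)) = 0 := by
        intro ω
        rw [hg, indicator_of_notMem]
        simpa only [mem_ball_zero_iff, hnorm] using hsR
      simp [this]
  · rw [indicator_of_notMem (fun h : s ∈ Ioi 0 => hs h),
      indicator_of_notMem (fun h : s ∈ Ioo 0 R => hs h.1)]

/-- The spherical means `s ↦ s^{n-1} ∫_{∂B_1} f(sω)` depend continuously on `s`. -/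
lemma continuous_sphere_mean {n : ℕ} {f : EuclideanSpace ℝ (Fin n) → ℝ} (hf : Continuous f) :
    Continuous fun s : ℝ => s ^ (n - 1) *
        ∫ ω : Metric.sphere (0 : EuclideanSpace ℝ (Fin n)) 1,
          f (s • (ω : EuclideanSpace ℝ (Fin n)))
          ∂(volume : Measure (EuclideanSpace ℝ (Fin n))).toSphere := by
  refine (continuous_pow _).mul ?_
  have := continuous_parametric_integral_of_continuous (X := ℝ)
    (μ := (volume : Measure (EuclideanSpace ℝ (Fin n))).toSphere)
    (f := fun s (ω : Metric.sphere (0 : EuclideanSpace ℝ (Fin n)) 1) =>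
      f (s • (ω : EuclideanSpace ℝ (Fin n))))
    (by simp only [Function.uncurry_def]; fun_prop) isCompact_univ
  simpa using this

/-- The divergence of a vector field, as the trace of its derivative. -/
noncomputable def divergence {n : ℕ} (F : EuclideanSpace ℝ (Fin n) → EuclideanSpace ℝ (Fin n))
    (x : EuclideanSpace ℝ (Fin n)) : ℝ :=
  LinearMap.trace ℝ _ (fderiv ℝ F x : EuclideanSpace ℝ (Fin n) →ₗ[ℝ] EuclideanSpace ℝ (Fin n))

lemma divergence_eq_sum {n : ℕ} {F : EuclideanSpace ℝ (Fin n) → EuclideanSpace ℝ (Fin n)}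
    {x : EuclideanSpace ℝ (Fin n)} :
    divergence F x = ∑ i, ⟪EuclideanSpace.basisFun (Fin n) ℝ i,
      fderiv ℝ F x (EuclideanSpace.basisFun (Fin n) ℝ i)⟫ :=
  LinearMap.trace_eq_sum_inner _ _

lemma continuous_divergence {n : ℕ} {F : EuclideanSpace ℝ (Fin n) → EuclideanSpace ℝ (Fin n)}
    (hF : ContDiff ℝ 1 F) : Continuous (divergence F) := by
  have h := hF.continuous_fderiv one_ne_zero
  have : divergence F = fun x => ∑ i, ⟪EuclideanSpace.basisFun (Fin n) ℝ i,
      fderiv ℝ F x (EuclideanSpace.basisFun (Fin n) ℝ i)⟫ := funext fun _ => divergence_eq_sum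
  rw [this]
  fun_prop

lemma divergence_smul {n : ℕ} {c : EuclideanSpace ℝ (Fin n) → ℝ}
    {F : EuclideanSpace ℝ (Fin n) → EuclideanSpace ℝ (Fin n)} {x : EuclideanSpace ℝ (Fin n)}
    (hc : DifferentiableAt ℝ c x) (hF : DifferentiableAt ℝ F x) :
    divergence (fun y => c y • F y) x = c x * divergence F x + fderiv ℝ c x (F x) := by
  unfold divergence
  rw [fderiv_fun_smul hc hF]
  simp only [ContinuousLinearMap.toLinearMap_add, ContinuousLinearMap.toLinearMap_smul, map_add,
    map_smul, smul_eq_mul]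
  congr 1
  exact LinearMap.trace_smulRight _ _

/-- A compactly supported field has total divergence zero. -/
lemma integral_divergence_eq_zero {n : ℕ}
    {F : EuclideanSpace ℝ (Fin n) → EuclideanSpace ℝ (Fin n)}
    (hF : ContDiff ℝ 1 F) (hs : HasCompactSupport F) : ∫ x, divergence F x = 0 := by
  have hc := hF.continuous_fderiv one_ne_zero
  have hs' := hs.fderiv (𝕜 := ℝ)
  have hint : ∀ i, Integrable fun x => fderiv ℝ F x (EuclideanSpace.basisFun (Fin n) ℝ i) := by
    intro i
    refine Continuous.integrable_of_hasCompactSupport (by fun_prop) ?_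
    exact hs'.comp_left (g := fun L => L (EuclideanSpace.basisFun (Fin n) ℝ i)) (by simp)
  simp_rw [divergence_eq_sum]
  rw [integral_finsetSum _ fun i _ => (hint i).const_inner _]
  refine Finset.sum_eq_zero fun i _ => ?_
  rw [integral_inner (hint i)]
  have := integral_smul_fderiv_eq_neg_fderiv_smul_of_integrable
    (μ := (volume : Measure (EuclideanSpace ℝ (Fin n)))) (𝕜 := ℝ) (f := fun _ => (1 : ℝ)) (g := F)
    (v := EuclideanSpace.basisFun (Fin n) ℝ i) (by simp) (by simpa using hint i)
    (by simpa using hF.continuous.integrable_of_hasCompactSupport hs)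
    (fun x _ => by fun_prop) (fun x _ => hF.differentiable one_ne_zero x)
  simp at this
  simp [this]

/-- The **divergence theorem on a ball**: the flux of a `C¹` field through `∂B_R` is the integral
of its divergence over `B_R`.  With `a(s) = ∫_{B_s} div F` and `b(s)` the flux through `∂B_s`,
integrating `div (φ(|x|²) F)` for `φ` with `φ' = h` and `φ = 0` on `[R², ∞)` gives
`∫₀^R 2 s h(s²) (a(s) - b(s)) ds = 0`; the choice `h(t) = (R² - t)⁺ (a - b)(√t)` makes the
integrand nonnegative, which forces `a = b` on `(0, R)`. -/
lemma integral_ball_divergence {n : ℕ} (hn : 1 ≤ n)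
    {F : EuclideanSpace ℝ (Fin n) → EuclideanSpace ℝ (Fin n)} (hF : ContDiff ℝ 1 F)
    {r : ℝ} (hr : 0 < r) :
    ∫ x in Metric.ball (0 : EuclideanSpace ℝ (Fin n)) r, divergence F x
      = r ^ (n - 1) * ∫ ω : Metric.sphere (0 : EuclideanSpace ℝ (Fin n)) 1,
          ⟪(ω : EuclideanSpace ℝ (Fin n)), F (r • (ω : EuclideanSpace ℝ (Fin n)))⟫
          ∂(volume : Measure (EuclideanSpace ℝ (Fin n))).toSphere := by
  have : Nontrivial (EuclideanSpace ℝ (Fin n)) :=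
    Module.nontrivial_of_finrank_pos (R := ℝ) (by simpa using Nat.lt_of_lt_of_le one_pos hn)
  have polar := fun {f : EuclideanSpace ℝ (Fin n) → ℝ} (hf : Continuous f) {R : ℝ} (hR : 0 < R) =>
    integral_ball_eq_integral_sphere hf hR
  simp only [finrank_euclideanSpace_fin] at polar
  have hFc := hF.continuous
  have hdiv := continuous_divergence hF
  set σ := (volume : Measure (EuclideanSpace ℝ (Fin n))).toSphere with hσ
  set A : ℝ → ℝ := fun s => s ^ (n - 1) *
    ∫ ω : Metric.sphere (0 : EuclideanSpace ℝ (Fin n)) 1,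
      divergence F (s • (ω : EuclideanSpace ℝ (Fin n))) ∂σ with hA
  set b : ℝ → ℝ := fun s => s ^ (n - 1) *
    ∫ ω : Metric.sphere (0 : EuclideanSpace ℝ (Fin n)) 1,
      ⟪(ω : EuclideanSpace ℝ (Fin n)), F (s • (ω : EuclideanSpace ℝ (Fin n)))⟫ ∂σ with hb
  have hAc : Continuous A := continuous_sphere_mean hdiv
  have hbc : Continuous b := by
    refine (continuous_pow _).mul ?_
    have := continuous_parametric_integral_of_continuous (X := ℝ) (μ := σ)
      (f := fun s (ω : Metric.sphere (0 : EuclideanSpace ℝ (Fin n)) 1) =>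
        ⟪(ω : EuclideanSpace ℝ (Fin n)), F (s • (ω : EuclideanSpace ℝ (Fin n)))⟫)
      (by simp only [Function.uncurry_def]; fun_prop) isCompact_univ
    simpa using this
  set a : ℝ → ℝ := fun s => ∫ t in (0 : ℝ)..s, A t with ha
  have had : ∀ s, HasDerivAt a (A s) s := fun s =>
    intervalIntegral.integral_hasDerivAt_right (hAc.intervalIntegrable _ _)
      hAc.stronglyMeasurable.stronglyMeasurableAtFilter hAc.continuousAt
  have hac : Continuous a := continuous_iff_continuousAt.2 fun s => (had s).continuousAt
  rw [polar hdiv hr]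
  change a r = b r
  -- any radius beyond `r` will do, so that `r` is interior to `(0, R)`
  obtain ⟨R, hrR⟩ : ∃ R, r < R := ⟨r + 1, by linarith⟩
  have hR : 0 < R := hr.trans hrR
  set h : ℝ → ℝ := fun t => max 0 (R ^ 2 - t) * (a (√t) - b (√t)) with hh
  have hhc : Continuous h := by fun_prop
  set φ : ℝ → ℝ := fun t => ∫ τ in (R ^ 2)..t, h τ with hφ
  have hφd : ∀ t, HasDerivAt φ (h t) t := fun s =>
    intervalIntegral.integral_hasDerivAt_right (hhc.intervalIntegrable _ _)
      hhc.stronglyMeasurable.stronglyMeasurableAtFilter hhc.continuousAt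
  have hφc : ContDiff ℝ 1 φ := by
    rw [contDiff_one_iff_deriv]
    refine ⟨fun t => (hφd t).differentiableAt, ?_⟩
    rwa [show deriv φ = h from funext fun t => (hφd t).deriv]
  have hh0 : ∀ t, R ^ 2 ≤ t → h t = 0 := fun t ht => by
    simp [hh, max_eq_left (sub_nonpos.2 ht)]
  have hφ0 : ∀ t, R ^ 2 ≤ t → φ t = 0 := fun t ht => by
    rw [hφ]
    refine (intervalIntegral.integral_congr (g := fun _ => 0) fun τ hτ => ?_).trans (by simp)
    rw [uIcc_of_le ht] at hτ
    exact hh0 τ hτ.1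
  set c : EuclideanSpace ℝ (Fin n) → ℝ := fun x => φ (‖x‖ ^ 2) with hc
  have hcC : ContDiff ℝ 1 c := hφc.comp (contDiff_norm_sq ℝ)
  have hcd : ∀ x v, fderiv ℝ c x v = h (‖x‖ ^ 2) * (2 * ⟪x, v⟫) := by
    intro x v
    have h1 := (hφd (‖x‖ ^ 2)).comp_hasFDerivAt x (hasStrictFDerivAt_norm_sq x).hasFDerivAt
    rw [show c = φ ∘ fun x => ‖x‖ ^ 2 from rfl, h1.fderiv]
    simp
  have hout : ∀ x ∉ Metric.ball (0 : EuclideanSpace ℝ (Fin n)) R, R ^ 2 ≤ ‖x‖ ^ 2 := by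
    intro x hx
    rw [mem_ball_zero_iff, not_lt] at hx
    gcongr
  have hzero : ∫ x, divergence (fun y => c y • F y) x = 0 := by
    refine integral_divergence_eq_zero (hcC.smul hF) ?_
    refine HasCompactSupport.intro (isCompact_closedBall 0 R) fun x hx => ?_
    have := hφ0 _ (hout x fun h => hx (Metric.ball_subset_closedBall h))
    simp [hc, this]
  have hdivc : ∀ x, divergence (fun y => c y • F y) x
      = c x * divergence F x + h (‖x‖ ^ 2) * (2 * ⟪x, F x⟫) := fun x => by
    rw [divergence_smul (hcC.differentiable one_ne_zero x) (hF.differentiable one_ne_zero x), hcd]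
  have hcc := hcC.continuous
  rw [← setIntegral_eq_integral_of_forall_compl_eq_zero
    (s := Metric.ball (0 : EuclideanSpace ℝ (Fin n)) R) (fun x hx => by
      rw [hdivc, hh0 _ (hout x hx), hc]; simp [hφ0 _ (hout x hx)])] at hzero
  simp_rw [hdivc] at hzero
  rw [polar (by fun_prop) hR] at hzero
  have hcomp : ∀ s ∈ uIcc 0 R, s ^ (n - 1) *
      ∫ ω : Metric.sphere (0 : EuclideanSpace ℝ (Fin n)) 1,
        (c (s • (ω : EuclideanSpace ℝ (Fin n))) * divergence F (s • (ω : EuclideanSpace ℝ (Fin n)))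
          + h (‖s • (ω : EuclideanSpace ℝ (Fin n))‖ ^ 2) *
            (2 * ⟪s • (ω : EuclideanSpace ℝ (Fin n)), F (s • (ω : EuclideanSpace ℝ (Fin n)))⟫)) ∂σ
      = φ (s ^ 2) * A s + 2 * s * h (s ^ 2) * b s := by
    intro s hs
    have hn2 : ∀ ω : Metric.sphere (0 : EuclideanSpace ℝ (Fin n)) 1,
        ‖s • (ω : EuclideanSpace ℝ (Fin n))‖ ^ 2 = s ^ 2 := by
      intro ω
      rw [norm_smul, norm_eq_of_mem_sphere, mul_one, Real.norm_eq_abs, sq_abs]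
    simp only [hc, hn2, inner_smul_left, conj_trivial]
    have hcs : ∀ {f : Metric.sphere (0 : EuclideanSpace ℝ (Fin n)) 1 → ℝ}, Continuous f →
        Integrable f σ := fun hf =>
      hf.integrable_of_hasCompactSupport (HasCompactSupport.of_compactSpace _)
    rw [integral_add (hcs (by fun_prop)) (hcs (by fun_prop)), integral_const_mul,
      integral_const_mul, integral_const_mul, integral_const_mul]
    simp only [hA, hb]
    ring
  rw [intervalIntegral.integral_congr hcomp] at hzero
  have hψd : ∀ s, HasDerivAt (fun s => φ (s ^ 2)) (2 * s * h (s ^ 2)) s := fun s => by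
    have := (hφd (s ^ 2)).comp s (hasDerivAt_pow 2 s)
    rwa [show h (s ^ 2) * ((2 : ℕ) * s ^ (2 - 1)) = 2 * s * h (s ^ 2) by push_cast; ring] at this
  have hφcc := hφc.continuous
  have parts := intervalIntegral.integral_mul_deriv_eq_deriv_mul (a := 0) (b := R)
    (fun s _ => hψd s) (fun s _ => had s)
    (Continuous.intervalIntegrable (by fun_prop) _ _) (hAc.intervalIntegrable _ _)
  rw [hφ0 _ le_rfl, show a 0 = 0 by simp [ha]] at parts
  rw [intervalIntegral.integral_add (Continuous.intervalIntegrable (by fun_prop) _ _)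
    (Continuous.intervalIntegrable (by fun_prop) _ _), parts] at hzero
  have hsq : ∫ s in (0 : ℝ)..R, 2 * s * (max 0 (R ^ 2 - s ^ 2) * (a s - b s) ^ 2) = 0 := by
    have : ∫ s in (0 : ℝ)..R, 2 * s * (max 0 (R ^ 2 - s ^ 2) * (a s - b s) ^ 2)
        = ∫ s in (0 : ℝ)..R, (2 * s * h (s ^ 2) * a s - 2 * s * h (s ^ 2) * b s) := by
      refine intervalIntegral.integral_congr fun s hs => ?_
      rw [uIcc_of_le hR.le] at hs
      simp only [hh, Real.sqrt_sq hs.1]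
      ring
    rw [this, intervalIntegral.integral_sub (Continuous.intervalIntegrable (by fun_prop) _ _)
      (Continuous.intervalIntegrable (by fun_prop) _ _)]
    linarith
  by_contra hne
  have hpos : 0 < ∫ s in (0 : ℝ)..R, 2 * s * (max 0 (R ^ 2 - s ^ 2) * (a s - b s) ^ 2) := by
    refine intervalIntegral.integral_pos hR (by fun_prop) (fun s hs => ?_) ⟨r, ⟨hr.le, hrR.le⟩, ?_⟩
    · have := hs.1.le
      positivity
    · have h1 : 0 < R ^ 2 - r ^ 2 := by nlinarith
      have h2 : a r - b r ≠ 0 := sub_ne_zero.2 hne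
      have h3 : 0 < max 0 (R ^ 2 - r ^ 2) := lt_max_of_lt_right h1
      positivity
  exact hpos.ne' hsq

/-- The divergence of the weighted field `u e^{-|x|²/4} ∇u`. -/
lemma divergence_weighted {n : ℕ} {u : EuclideanSpace ℝ (Fin n) → ℝ} (hu : ContDiff ℝ 2 u)
    (hg : ContDiff ℝ 1 (gradient u)) (x : EuclideanSpace ℝ (Fin n)) :
    divergence (fun y => (u y * Real.exp (-‖y‖ ^ 2 / 4)) • gradient u y) x
      = (‖gradient u x‖ ^ 2 + u x * (lap u x - ⟪x, gradient u x⟫ / 2))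
        * Real.exp (-‖x‖ ^ 2 / 4) := by
  have hud := hu.differentiable two_ne_zero x
  have hw : HasFDerivAt (fun y : EuclideanSpace ℝ (Fin n) => Real.exp (-‖y‖ ^ 2 / 4))
      (Real.exp (-‖x‖ ^ 2 / 4) • (-(1 / 2 : ℝ)) • innerSL ℝ x) x := by
    have h1 := ((hasStrictFDerivAt_norm_sq x).hasFDerivAt.const_mul (-(1 / 4 : ℝ))).exp
    have h2 : ∀ y : EuclideanSpace ℝ (Fin n), -(1 / 4) * ‖y‖ ^ 2 = -‖y‖ ^ 2 / 4 := fun y => by ring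
    simp only [h2] at h1
    rwa [show -(1 / 4 : ℝ) • 2 • innerSL ℝ x = -(1 / 2 : ℝ) • innerSL ℝ x by module] at h1
  rw [divergence_smul (hud.fun_mul hw.differentiableAt) (hg.differentiable one_ne_zero x),
    (hud.hasFDerivAt.fun_mul hw).fderiv]
  have h2 : fderiv ℝ u x (gradient u x) = ‖gradient u x‖ ^ 2 := by
    rw [← inner_gradient_left, real_inner_self_eq_norm_sq]
  simp only [add_apply, smul_apply, h2, smul_eq_mul,
    innerSL_apply_apply]
  change u x * _ * lap u x + _ = _
  ring

/-- for a solution of `Δu − ⟨x,∇u⟩/2 + Vu = 0`,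
`∫_{∂B_r} u ∂_r u dσ = e^{r²/4} ∫_{B_r} (|∇u|² − V u²) e^{−|x|²/4} dx`; equivalently
`D(r) = r^{2−n} e^{r²/4} ∫_{B_r} (|∇u|² − V u²) e^{−|x|²/4} dx`. -/
theorem freqD_eq_weighted_dirichlet_integral
    {n : ℕ} (hn : 1 ≤ n)
    (u : EuclideanSpace ℝ (Fin n) → ℝ) (hu : ContDiff ℝ 2 u)
    (V : EuclideanSpace ℝ (Fin n) → ℝ) (hV : Continuous V)
    (hpde : ∀ x, lap u x - ⟪x, gradient u x⟫ / 2 + V x * u x = 0) :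
    ∀ r : ℝ, 0 < r →
      sphereIntegral (fun x => u x * radialDeriv u x) r
        = Real.exp (r ^ 2 / 4) *
          ∫ x in Metric.ball (0 : EuclideanSpace ℝ (Fin n)) r,
            (‖gradient u x‖ ^ 2 - V x * u x ^ 2) * Real.exp (-‖x‖ ^ 2 / 4) ∧
      freqD u r
        = r ^ (2 - (n : ℤ)) * Real.exp (r ^ 2 / 4) *
          ∫ x in Metric.ball (0 : EuclideanSpace ℝ (Fin n)) r,
            (‖gradient u x‖ ^ 2 - V x * u x ^ 2) * Real.exp (-‖x‖ ^ 2 / 4) := by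
  intro r hr
  have hg : ContDiff ℝ 1 (gradient u) :=
    (InnerProductSpace.toDual ℝ (EuclideanSpace ℝ (Fin n))).symm.contDiff.comp
      (hu.fderiv_right (m := 1) (by norm_num))
  have hw : ContDiff ℝ 1 fun y : EuclideanSpace ℝ (Fin n) => Real.exp (-‖y‖ ^ 2 / 4) :=
    (((contDiff_norm_sq ℝ).neg).div_const 4).exp
  have hdiv : ∀ x, (‖gradient u x‖ ^ 2 - V x * u x ^ 2) * Real.exp (-‖x‖ ^ 2 / 4)
      = divergence (fun y => (u y * Real.exp (-‖y‖ ^ 2 / 4)) • gradient u y) x := by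
    intro x
    rw [divergence_weighted hu hg]
    linear_combination -(u x * Real.exp (-‖x‖ ^ 2 / 4)) * hpde x
  have key : sphereIntegral (fun x => u x * radialDeriv u x) r
        = Real.exp (r ^ 2 / 4) *
          ∫ x in Metric.ball (0 : EuclideanSpace ℝ (Fin n)) r,
            (‖gradient u x‖ ^ 2 - V x * u x ^ 2) * Real.exp (-‖x‖ ^ 2 / 4) := by
    simp_rw [hdiv]
    have hF : ContDiff ℝ 1 fun y => (u y * Real.exp (-‖y‖ ^ 2 / 4)) • gradient u y :=
      ((hu.of_le one_le_two).mul hw).smul hg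
    rw [integral_ball_divergence hn hF hr]
    have hpt : ∀ ω : Metric.sphere (0 : EuclideanSpace ℝ (Fin n)) 1,
        ⟪(ω : EuclideanSpace ℝ (Fin n)), (u (r • (ω : EuclideanSpace ℝ (Fin n))) *
            Real.exp (-‖r • (ω : EuclideanSpace ℝ (Fin n))‖ ^ 2 / 4)) •
            gradient u (r • (ω : EuclideanSpace ℝ (Fin n)))⟫
          = Real.exp (-r ^ 2 / 4) * (u (r • (ω : EuclideanSpace ℝ (Fin n))) *
            radialDeriv u (r • (ω : EuclideanSpace ℝ (Fin n)))) := by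
      intro ω
      have hnorm : ‖r • (ω : EuclideanSpace ℝ (Fin n))‖ = r := by
        rw [norm_smul, norm_eq_of_mem_sphere, mul_one, Real.norm_of_nonneg hr.le]
      rw [radialDeriv, hnorm, inv_smul_smul₀ hr.ne', real_inner_smul_right, real_inner_comm]
      ring
    simp_rw [hpt]
    have hexp : Real.exp (r ^ 2 / 4) * Real.exp (-r ^ 2 / 4) = 1 := by
      rw [← Real.exp_add, neg_div, add_neg_cancel, Real.exp_zero]
    have hpow : r ^ ((n : ℤ) - 1) = r ^ (n - 1) := by
      rw [← Nat.cast_one, ← Nat.cast_sub hn, zpow_natCast]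
    rw [integral_const_mul, sphereIntegral, hpow]
    linear_combination -(r ^ (n - 1) * ∫ ω : Metric.sphere (0 : EuclideanSpace ℝ (Fin n)) 1,
      u (r • (ω : EuclideanSpace ℝ (Fin n))) * radialDeriv u (r • (ω : EuclideanSpace ℝ (Fin n)))
      ∂(volume : Measure (EuclideanSpace ℝ (Fin n))).toSphere) * hexp
  exact ⟨key, by rw [freqD, key, mul_assoc]⟩
end
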